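/- arXiv:0706.2731 — 2 statements merged into one kernel-verified Lean document; each statement's English description precedes it below -/
import Mathlib

section
/- Let A be a commutative ring, M an A-module, and F• a chain complex of flat A-modules bounded below. If L• is a resolution of M by A-modules (i.e. a nonneg complex with H_j(L•) = 0 for j ≠ 0 and H_0(L•) ≅ M), then for each i there is a natural isomorphism H_i(F• ⊗_A L•) ≅ H_i(F• ⊗_A M). -/
/-!
The isomorphism `H₀(L) ≅ M` gives an augmentation `f : L ⟶ M`, surjective in each degree.
It suffices to show that `F ⊗ f` is a quasi-isomorphism; as `F ⊗ f` is again surjective, this means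
that the kernel of `F ⊗ f` is acyclic (`quasiIso_of_surjective`).

Since each `F_i` is flat, the augmented complex `⋯ ⟶ F_i ⊗ L_1 ⟶ F_i ⊗ L_0 ⟶ F_i ⊗ M ⟶ 0` is exact.
Let `z` be a cycle of `F ⊗ L` killed by `F ⊗ f`, and let `x ∈ F_k ⊗ L_j` be its component with the
largest `k`. The part of the differential coming from `F` lowers the index `k`, so the component of
`d z` in `F_k ⊗ L_{j-1}` is, up to sign, the image of `x` under `F_k ⊗ d`, which therefore vanishes; for
`j = 0` it is the image of `x` in `F_k ⊗ M` that vanishes, because `F ⊗ f` kills `z`.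
By exactness `x` is the image of some `w ∈ F_k ⊗ L_{j+1}`, and subtracting `± d w` from `z` lowers
`k`. Degree `n` of `F ⊗ L` only involves `k ≤ n`, so finitely many steps show that `z` is the
boundary of an element killed by `F ⊗ f` (`exists_of_mem_fil`).
-/

open CategoryTheory CategoryTheory.Limits MonoidalCategory

noncomputable instance curriedTensorAdditive (A : Type) [CommRing A] :
    (curriedTensor (ModuleCat A)).Additive where
  map_add {X Y f g} := by
    ext Z
    simp [curriedTensor, MonoidalPreadditive.add_whiskerRight]

namespace FlatResolution

open HomologicalComplex

variable {A : Type} [CommRing A]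

/-- A degreewise surjective morphism of complexes is a quasi-isomorphism if its kernel is acyclic.
The acyclicity is spelled out on elements, so that the kernel complex does not appear. -/
lemma quasiIso_of_surjective {K N : ChainComplex (ModuleCat A) ℕ} (f : K ⟶ N)
    (hsurj : ∀ n, Function.Surjective (f.f n))
    (hker : ∀ n (z : K.X n), f.f n z = 0 → (∀ m, K.d n m z = 0) →
      ∃ w : K.X (n + 1), f.f (n + 1) w = 0 ∧ K.d (n + 1) n w = z) :
    QuasiIso f := by
  have hepi : Epi f := by
    have (n : ℕ) : Epi (f.f n) := (ModuleCat.epi_iff_surjective _).2 (hsurj n)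
    exact HomologicalComplex.epi_of_epi_f f this
  let S := ShortComplex.mk (kernel.ι f) f (kernel.condition f)
  have hS : S.ShortExact :=
    { exact := ShortComplex.exact_of_f_is_kernel _ (kernelIsKernel f) }
  have hSn (n) : (S.map (HomologicalComplex.eval _ _ n)).ShortExact := hS.map_of_exact _
  have hac (n) : IsZero (S.X₁.homology n) := by
    rw [← exactAt_iff_isZero_homology, exactAt_iff' _ (n + 1) n _ (by simp) rfl,
      ShortComplex.moduleCat_exact_iff]
    intro (x : (kernel f).X n) (hx : (kernel f).d n _ x = 0)
    obtain ⟨w, hw, hwz⟩ := hker n ((kernel.ι f).f n x)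
      (by rw [← ConcreteCategory.comp_apply, ← HomologicalComplex.comp_f, kernel.condition]; rfl)
      (fun m => by
        by_cases hm : (ComplexShape.down ℕ).Rel n m
        · obtain rfl := (ComplexShape.down ℕ).next_eq' hm
          rw [← ConcreteCategory.comp_apply, Hom.comm, ConcreteCategory.comp_apply]
          erw [hx, map_zero]
        · rw [K.shape _ _ hm]; rfl)
    obtain ⟨(v : (kernel f).X (n + 1)), (hv : (kernel.ι f).f (n + 1) v = w)⟩ :=
      (ShortComplex.moduleCat_exact_iff _).1 (hSn (n + 1)).exact w hw
    refine ⟨v, (hSn n).moduleCat_injective_f ?_⟩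
    change (kernel.ι f).f n ((kernel f).d (n + 1) n v) = (kernel.ι f).f n x
    rw [← hwz, ← ConcreteCategory.comp_apply, ← Hom.comm, ConcreteCategory.comp_apply, hv]
  rw [quasiIso_iff]
  intro n
  rw [quasiIsoAt_iff_isIso_homologyMap]
  have : Mono (homologyMap f n) := (hS.homology_exact₂ n).mono_g ((hac n).eq_of_src _ _)
  have : Epi (homologyMap f n) := by
    by_cases! hn : ∃ m, (ComplexShape.down ℕ).Rel n m
    · obtain ⟨m, hm⟩ := hn
      exact (hS.homology_exact₃ n m hm).epi_f ((hac m).eq_of_tgt _ _)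
    · exact epi_homologyMap_of_epi_of_not_rel f n hn
  exact isIso_of_mono_of_epi _

variable (F L : ChainComplex (ModuleCat A) ℕ)

/-- The total tensor product `F ⊗ L`. The name distinguishes it from `MonoidalCategory.tensorObj`. -/
noncomputable abbrev tot : ChainComplex (ModuleCat A) ℕ := HomologicalComplex.tensorObj F L

/-- The inclusion of the summand `F_i ⊗ L_j` in degree `n = i + j` of `F ⊗ L`. -/
noncomputable abbrev ιTot (i j n : ℕ) (h : i + j = n) :
    (F.X i ⊗ L.X j : ModuleCat A) ⟶ (tot F L).X n := ιTensorObj F L i j n h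

variable {L} in
/-- The morphism `F ⊗ f` on total tensor products. -/
noncomputable abbrev totMap {N : ChainComplex (ModuleCat A) ℕ} (f : L ⟶ N) : tot F L ⟶ tot F N :=
  HomologicalComplex.tensorHom (𝟙 F) f

/-- The projection of degree `n` of `F ⊗ L` onto the summand `F_i ⊗ L_j`; it is zero when
`i + j ≠ n`. -/
noncomputable def proj (i j n : ℕ) : (tot F L).X n ⟶ (F.X i ⊗ L.X j : ModuleCat A) :=
  mapBifunctorDesc fun i' j' _ =>
    if h : i' = i ∧ j' = j then eqToHom (by rw [h.1, h.2]; rfl) else 0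

lemma ι_proj_self (i j n : ℕ) (h : i + j = n) :
    ιTot F L i j n h ≫ proj F L i j n = 𝟙 _ := by
  simp [proj]

lemma ι_proj_of_ne (i j i' j' n : ℕ) (h : i' + j' = n) (hi : i' ≠ i) :
    ιTot F L i' j' n h ≫ proj F L i j n = 0 := by
  simp [proj, hi]

/-- The filtration of degree `n` of `F ⊗ L` by the degree in `F`: the submodule generated by the
summands `F_i ⊗ L_j` with `i + j = n` and `i < k`. -/
noncomputable def fil (n k : ℕ) : Submodule A ((tot F L).X n) :=
  ⨆ (i : ℕ) (j : ℕ) (h : i + j = n) (_ : i < k), LinearMap.range (ιTot F L i j n h).hom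

variable {F L}

lemma ι_mem_fil {i j n k : ℕ} (h : i + j = n) (hi : i < k) (x : (F.X i ⊗ L.X j : ModuleCat A)) :
    ιTot F L i j n h x ∈ fil F L n k :=
  Submodule.mem_iSup_of_mem i <| Submodule.mem_iSup_of_mem j <| Submodule.mem_iSup_of_mem h <|
    Submodule.mem_iSup_of_mem hi ⟨x, rfl⟩

lemma fil_le {n k : ℕ} {P : Submodule A ((tot F L).X n)}
    (hP : ∀ i j (h : i + j = n), i < k → ∀ x, ιTot F L i j n h x ∈ P) : fil F L n k ≤ P := by
  refine iSup_le fun i => iSup_le fun j => iSup_le fun h => iSup_le fun hi => ?_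
  rintro _ ⟨x, rfl⟩
  exact hP i j h hi x

lemma fil_eq_top (n : ℕ) : fil F L n (n + 1) = ⊤ := by
  have : ModuleCat.ofHom (fil F L n (n + 1)).mkQ = 0 := by
    apply mapBifunctor.hom_ext
    intro i j h
    ext x
    exact (Submodule.Quotient.mk_eq_zero _).2
      (ι_mem_fil h (by have h : i + j = n := h; omega) x)
  rw [← Submodule.ker_mkQ (fil F L n (n + 1))]
  exact LinearMap.ker_eq_top.2 (congrArg ModuleCat.Hom.hom this)

lemma fil_zero (n : ℕ) : fil F L n 0 = ⊥ :=
  le_bot_iff.1 (fil_le (by simp))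

lemma proj_fil {i j n k : ℕ} (hk : k ≤ i) {z : (tot F L).X n} (hz : z ∈ fil F L n k) :
    proj F L i j n z = 0 := by
  refine fil_le (P := LinearMap.ker (proj F L i j n).hom) (fun i' j' h hi x => ?_) hz
  exact congr($(ι_proj_of_ne F L i j i' j' n h (by omega)) x)

/-- The quotient of consecutive steps of the filtration is at most one summand: none if `k > n`
(the first alternative), and `F_k ⊗ L_{n-k}` otherwise. -/
lemma exists_of_mem_fil_succ {n k : ℕ} {z : (tot F L).X n} (hz : z ∈ fil F L n (k + 1)) :
    z ∈ fil F L n k ∨ ∃ (j : ℕ) (h : k + j = n) (x : (F.X k ⊗ L.X j : ModuleCat A)),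
      z - ιTot F L k j n h x ∈ fil F L n k := by
  by_cases hkn : k ≤ n
  · right
    obtain ⟨j, rfl⟩ := Nat.exists_eq_add_of_le hkn
    have := fil_le (P := fil F L (k + j) k ⊔ LinearMap.range (ιTot F L k j _ rfl).hom)
      (fun i j' h hi x => by
        obtain hi | rfl := Nat.lt_succ_iff_lt_or_eq.1 hi
        · exact Submodule.mem_sup_left (ι_mem_fil h hi x)
        · obtain rfl : j' = j := by omega
          exact Submodule.mem_sup_right ⟨x, rfl⟩) hz
    obtain ⟨y, hy, _, ⟨x, rfl⟩, rfl⟩ := Submodule.mem_sup.1 this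
    exact ⟨j, rfl, x, by simpa using hy⟩
  · left
    exact fil_le (fun i j h hi x => ι_mem_fil h (by omega) x) hz


lemma d_ι {i j n m : ℕ} (h : i + j = n) (x : (F.X i ⊗ L.X j : ModuleCat A)) :
    (tot F L).d n m (ιTot F L i j n h x) =
      mapBifunctor.d₁ F L (curriedTensor _) (.down ℕ) i j m x +
      mapBifunctor.d₂ F L (curriedTensor _) (.down ℕ) i j m x := by
  have : ιTot F L i j n h ≫ (tot F L).d n m =
      mapBifunctor.d₁ F L (curriedTensor _) (.down ℕ) i j m +
      mapBifunctor.d₂ F L (curriedTensor _) (.down ℕ) i j m := by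
    rw [mapBifunctor.d_eq, Preadditive.comp_add, mapBifunctor.ι_D₁, mapBifunctor.ι_D₂]
  exact congr($this x)

/-- The part of the differential coming from `F` strictly lowers the filtration. -/
lemma d₁_mem_fil (i j m : ℕ) (x : (F.X i ⊗ L.X j : ModuleCat A)) :
    mapBifunctor.d₁ F L (curriedTensor _) (.down ℕ) i j m x ∈ fil F L m i := by
  by_cases hi : (ComplexShape.down ℕ).Rel i ((ComplexShape.down ℕ).next i)
  · by_cases hm : (ComplexShape.down ℕ).next i + j = m
    · rw [mapBifunctor.d₁_eq F L _ _ hi j m hm]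
      have := ι_mem_fil (F := F) (L := L) (k := i) hm (by have : _ + 1 = i := hi; omega)
        ((F.d i _ ▷ L.X j) x)
      rcases Int.units_eq_one_or (ComplexShape.ε₁ (.down ℕ) (.down ℕ) (.down ℕ) (i, j)) with h | h
      · rw [h, one_smul]
        exact this
      · rw [h, Units.neg_smul, one_smul]
        exact neg_mem this
    · rw [mapBifunctor.d₁_eq_zero' F L _ _ hi j m hm]
      exact zero_mem _
  · rw [mapBifunctor.d₁_eq_zero _ _ _ _ _ _ _ hi]
    exact zero_mem _

lemma d₂_eq_or {i j n : ℕ} (h : i + j = n) (x : (F.X i ⊗ L.X (j + 1) : ModuleCat A)) :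
    mapBifunctor.d₂ F L (curriedTensor _) (.down ℕ) i (j + 1) n x =
      ιTot F L i j n h ((F.X i ◁ L.d (j + 1) j) x) ∨
    mapBifunctor.d₂ F L (curriedTensor _) (.down ℕ) i (j + 1) n x =
      - ιTot F L i j n h ((F.X i ◁ L.d (j + 1) j) x) := by
  rw [mapBifunctor.d₂_eq F L _ _ i (show (ComplexShape.down ℕ).Rel (j + 1) j from rfl) n h]
  rcases Int.units_eq_one_or
    (ComplexShape.ε₂ (.down ℕ) (.down ℕ) (.down ℕ) (i, j + 1)) with h | h
  · left
    rw [h, one_smul]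
    rfl
  · right
    rw [h, Units.neg_smul, one_smul]
    rfl

lemma d₂_mem_fil (i j m : ℕ) (x : (F.X i ⊗ L.X j : ModuleCat A)) :
    mapBifunctor.d₂ F L (curriedTensor _) (.down ℕ) i j m x ∈ fil F L m (i + 1) := by
  cases j with
  | zero =>
    rw [mapBifunctor.d₂_eq_zero _ _ _ _ _ _ _ (by simp)]
    exact zero_mem _
  | succ j =>
    by_cases hm : i + j = m
    · have := ι_mem_fil (F := F) (L := L) (k := i + 1) hm (by omega) ((F.X i ◁ L.d (j + 1) j) x)
      rcases d₂_eq_or hm x with h | h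
      · rw [h]
        exact this
      · rw [h]
        exact neg_mem this
    · rw [mapBifunctor.d₂_eq_zero' F L _ _ i (show (ComplexShape.down ℕ).Rel (j + 1) j from rfl)
        m hm]
      exact zero_mem _

lemma fil_mono {n k k' : ℕ} (h : k ≤ k') : fil F L n k ≤ fil F L n k' :=
  fil_le fun _ _ h' hi x => ι_mem_fil h' (by omega) x

lemma d_mem_fil {n m k : ℕ} {z : (tot F L).X n} (hz : z ∈ fil F L n k) :
    (tot F L).d n m z ∈ fil F L m k :=
  fil_le (P := (fil F L m k).comap ((tot F L).d n m).hom) (fun i j h hi x => by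
    change (tot F L).d n m _ ∈ fil F L m k
    rw [d_ι]
    exact add_mem (fil_mono (by omega) (d₁_mem_fil _ _ _ _))
      (fil_mono (by omega) (d₂_mem_fil _ _ _ _))) hz

variable {N : ChainComplex (ModuleCat A) ℕ} (f : L ⟶ N)

lemma map_ι {i j n : ℕ} (h : i + j = n) (x : (F.X i ⊗ L.X j : ModuleCat A)) :
    (totMap F f).f n (ιTot F L i j n h x) =
      ιTot F N i j n h ((F.X i ◁ f.f j) x) := by
  have : ιTot F L i j n h ≫ (totMap F f).f n = (F.X i ◁ f.f j) ≫ ιTot F N i j n h := by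
    refine (ι_mapBifunctorMap (𝟙 F) f (curriedTensor (ModuleCat A)) (.down ℕ) i j n h).trans ?_
    simp
  exact congr($this x)

lemma map_mem_fil {n k : ℕ} {z : (tot F L).X n} (hz : z ∈ fil F L n k) :
    (totMap F f).f n z ∈ fil F N n k :=
  fil_le (P := (fil F N n k).comap ((totMap F f).f n).hom) (fun i j h hi x => by
    change (totMap F f).f n _ ∈ fil F N n k
    rw [map_ι]
    exact ι_mem_fil h hi _) hz


variable {f} in
lemma totMap_surjective (hf : ∀ j, Function.Surjective (f.f j)) (n : ℕ) :
    Function.Surjective ((totMap F f).f n) := by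
  rw [← LinearMap.range_eq_top (f := ((totMap F f).f n).hom), eq_top_iff, ← fil_eq_top]
  refine fil_le fun i j h _ x => ?_
  obtain ⟨y, hy⟩ := LinearMap.lTensor_surjective (F.X i) (g := (f.f j).hom) (hf j) x
  exact ⟨ιTot F L i j n h y, (map_ι f h y).trans (congrArg _ hy)⟩

variable {f} in
/-- If the kernel of each `F_i ⊗ f` is acyclic (hypothesis `hex`), then so is the kernel of
`F ⊗ f`: induction on the filtration step `k` containing the cycle `z`. -/
lemma exists_of_mem_fil
    (hex : ∀ i j (x : (F.X i ⊗ L.X j : ModuleCat A)), (F.X i ◁ f.f j) x = 0 →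
      (∀ j', (F.X i ◁ L.d j j') x = 0) →
      ∃ w : (F.X i ⊗ L.X (j + 1) : ModuleCat A),
        (F.X i ◁ f.f (j + 1)) w = 0 ∧ (F.X i ◁ L.d (j + 1) j) w = x)
    (n k : ℕ) (z : (tot F L).X n) (hz : z ∈ fil F L n k)
    (hfz : (totMap F f).f n z = 0) (hdz : ∀ m, (tot F L).d n m z = 0) :
    ∃ w : (tot F L).X (n + 1), (totMap F f).f (n + 1) w = 0 ∧ (tot F L).d (n + 1) n w = z := by
  induction k generalizing z with
  | zero =>
    rw [fil_zero, Submodule.mem_bot] at hz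
    exact ⟨0, map_zero _, by rw [hz, map_zero]⟩
  | succ k ih =>
    obtain hz | ⟨j, h, x, hx⟩ := exists_of_mem_fil_succ hz
    · exact ih z hz hfz hdz
    -- Both `F ⊗ f` and `d` preserve the filtration, so only the top component `x` of `z` matters
    -- after projecting to the summands indexed by `k`.
    have hfx : (F.X k ◁ f.f j) x = 0 := by
      have := proj_fil (j := j) le_rfl (map_mem_fil f hx)
      rw [map_sub, hfz, map_ι, zero_sub, map_neg, neg_eq_zero] at this
      rw [← this]
      exact congr($(ι_proj_self F N k j n h) ((F.X k ◁ f.f j) x)).symm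
    have hdx (j' : ℕ) : (F.X k ◁ L.d j j') x = 0 := by
      by_cases hj : j' + 1 = j
      · subst hj
        have h' : k + j' = k + j' := rfl
        have := proj_fil (j := j') le_rfl (d_mem_fil (m := k + j') hx)
        rw [map_sub, hdz, d_ι, zero_sub, map_neg, neg_eq_zero, map_add,
          proj_fil le_rfl (d₁_mem_fil _ _ _ _), zero_add] at this
        have h'' := congr($(ι_proj_self F L k j' _ h') ((F.X k ◁ L.d (j' + 1) j') x))
        refine h''.symm.trans ?_
        rcases d₂_eq_or h' x with h₂ | h₂
        · rwa [h₂] at this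
        · rwa [h₂, map_neg, neg_eq_zero] at this
      · rw [L.shape _ _ hj]
        simp
    obtain ⟨w, hfw, hdw⟩ := hex k j x hfx hdx
    -- `v` is `±w` placed in the summand `F_k ⊗ L_{j+1}`, with the sign of the total differential.
    obtain ⟨v, hfv, hdv⟩ : ∃ v : (tot F L).X (n + 1),
        (totMap F f).f (n + 1) v = 0 ∧ z - (tot F L).d (n + 1) n v ∈ fil F L n k := by
      have h₁ := d₁_mem_fil k (j + 1) n w
      have hι : (totMap F f).f (n + 1) (ιTot F L k (j + 1) (n + 1) (by omega) w) = 0 := by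
        rw [map_ι, hfw, map_zero]
      rcases d₂_eq_or h w with h₂ | h₂
      · refine ⟨ιTot F L k (j + 1) (n + 1) (by omega) w, hι, ?_⟩
        rw [d_ι, h₂, hdw]
        convert sub_mem hx h₁ using 1
        abel
      · refine ⟨- ιTot F L k (j + 1) (n + 1) (by omega) w, by rw [map_neg, hι, neg_zero], ?_⟩
        rw [map_neg, d_ι, h₂, hdw]
        convert add_mem hx h₁ using 1
        abel
    obtain ⟨u, hfu, hdu⟩ := ih _ hdv
      (by
        rw [map_sub, hfz, zero_sub, ← ConcreteCategory.comp_apply, ← Hom.comm,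
          ConcreteCategory.comp_apply, hfv, map_zero, neg_zero])
      (fun m => by
        rw [map_sub, hdz, zero_sub, ← ConcreteCategory.comp_apply, d_comp_d]
        exact neg_zero)
    exact ⟨u + v, by rw [map_add, hfu, hfv, add_zero], by rw [map_add, hdu, sub_add_cancel]⟩

variable (L) in
/-- The augmentation `L_0 ⟶ M` obtained from `H₀(L) ≅ M`: as nothing leaves degree `0`, `H₀(L)` is
the cokernel of `L_1 ⟶ L_0`. -/
lemma exists_augmentation (M : ModuleCat A) (e : L.homology 0 ≅ M) :
    ∃ φ : L.X 0 ⟶ M, Function.Surjective φ ∧ Function.Exact (L.d 1 0) φ := by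
  let e' : L.opcycles 0 ≅ M := (ChainComplex.isoHomologyι₀ L).symm ≪≫ e
  refine ⟨L.pOpcycles 0 ≫ e'.hom, (ModuleCat.epi_iff_surjective _).1 inferInstance, fun x => ?_⟩
  have hinj : Function.Injective e'.hom := (ModuleCat.mono_iff_injective _).1 inferInstance
  have h1 : (L.pOpcycles 0 ≫ e'.hom) x = 0 ↔ L.pOpcycles 0 x = 0 :=
    map_eq_zero_iff e'.hom.hom hinj
  have hp : (ComplexShape.down ℕ).prev 0 = 1 := by simp
  rw [h1, ← hp]
  exact (L.sc 0).moduleCat_pOpcycles_eq_zero_iff x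

end FlatResolution

/-- **Tensoring a bounded-below complex of flat modules with a resolution.**
Let `A` be a commutative ring, `M` an `A`-module, and `F` a chain complex of flat `A`-modules
(indexed by `ℕ`, hence bounded below).  If `L` is a resolution of `M` (a nonnegatively graded
complex with `H_j(L) = 0` for `j ≠ 0` and `H_0(L) ≅ M`), then for each `i` there is an
isomorphism `H_i(F ⊗_A L) ≅ H_i(F ⊗_A M)`, where `F ⊗_A M` denotes the tensor product of `F`
with the complex consisting of `M` concentrated in degree `0`. -/
theorem homology_tensor_flat_resolution (A : Type) [CommRing A]
    (M : Type) [AddCommGroup M] [Module A M]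
    (F L : ChainComplex (ModuleCat A) ℕ)
    (hFflat : ∀ i, Module.Flat A (F.X i))
    (hL0 : Nonempty (L.homology 0 ≅ ModuleCat.of A M))
    (hLpos : ∀ j ≠ 0, IsZero (L.homology j)) (i : ℕ) :
    Nonempty
      ((HomologicalComplex.tensorObj F L).homology i ≅
        (HomologicalComplex.tensorObj F
          ((ChainComplex.single₀ (ModuleCat A)).obj (ModuleCat.of A M))).homology i) := by
  obtain ⟨e⟩ := hL0
  obtain ⟨φ, hφ, hex⟩ := FlatResolution.exists_augmentation L _ e
  have hdφ : L.d 1 0 ≫ φ = 0 := by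
    ext x
    exact hex.apply_apply_eq_zero x
  let f := (ChainComplex.toSingle₀Equiv L (ModuleCat.of A M)).symm ⟨φ, hdφ⟩
  have hf0 : f.f 0 = φ := ChainComplex.toSingle₀Equiv_symm_apply_f_zero φ hdφ
  have hz (j : ℕ) :
      IsZero (((ChainComplex.single₀ (ModuleCat A)).obj (ModuleCat.of A M)).X (j + 1)) :=
    HomologicalComplex.isZero_single_obj_X _ _ _ _ (by simp)
  have hfs (j : ℕ) : f.f (j + 1) = 0 := (hz j).eq_of_tgt _ _
  have hq : QuasiIso (FlatResolution.totMap F f) := by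
    refine FlatResolution.quasiIso_of_surjective _
      (FlatResolution.totMap_surjective fun j => ?_)
      (fun n z => FlatResolution.exists_of_mem_fil ?_ n (n + 1) z
        (by rw [FlatResolution.fil_eq_top]; trivial))
    · cases j with
      | zero => rw [hf0]; exact hφ
      | succ j =>
        have := ModuleCat.isZero_iff_subsingleton.1 (hz j)
        exact fun y => ⟨0, Subsingleton.elim _ _⟩
    · intro i j x hfx hdx
      have hw (w : (F.X i ⊗ L.X (j + 1) : ModuleCat A)) : (F.X i ◁ f.f (j + 1)) w = 0 := by
        rw [hfs]
        simp
      suffices ∃ w, (F.X i ◁ L.d (j + 1) j) w = x from this.imp fun w h => ⟨hw w, h⟩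
      cases j with
      | zero =>
        rw [hf0] at hfx
        -- Right exactness of the tensor product suffices here; flatness is needed in degrees `> 0`.
        exact (lTensor_exact (F.X i) (f := (L.d 1 0).hom) (g := φ.hom) hex hφ x).1 hfx
      | succ j =>
        have hLe : Function.Exact (L.d (j + 2) (j + 1)).hom (L.d (j + 1) j).hom := by
          have := (HomologicalComplex.exactAt_iff_isZero_homology _ _).2 (hLpos (j + 1) (by simp))
          rw [HomologicalComplex.exactAt_iff' _ (j + 2) (j + 1) j (by simp) (by simp)] at this
          exact (ShortComplex.ShortExact.moduleCat_exact_iff_function_exact _).1 this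
        exact (Module.Flat.lTensor_exact (F.X i) hLe x).1 (hdx j)
  exact ⟨isoOfQuasiIsoAt (FlatResolution.totMap F f) i⟩
end

section
/- Let R be a regular local ring and M, N finitely generated R-modules with Tor_1^R(M, N) = 0 and M ⊗_R N Cohen–Macaulay. Then codim(M ⊗_R N) = pdim(M) + pdim(N), where codim denotes dim R minus the dimension of the module and pdim denotes projective dimension. -/
/-!
For a nonzero finitely generated module over the regular local ring `R` of dimension `n`, the
Auslander–Buchsbaum formula reads `pdim + depth = n`. Since `M ⊗ N` is Cohen–Macaulay, its
dimension is its depth, and the claim becomes the depth formula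

  `depth M + depth N = n + depth (M ⊗ N)`   when `Tor₁(M, N) = 0`,

which is proved by Serre's reduction to the diagonal (`depth_formula_regularLocal`).

* *Two independent copies of `R`.* Because `R` contains a field, Cohen's structure theorem, applied
  to the completion, gives a flat map `ψ : R → k⟦X₁, …, Xₙ⟧` sending a regular system of parameters
  `xⱼ` to the variables `Xⱼ` (`exists_hom_powerSeries`). The coefficient field is found by formal
  smoothness of the residue field over a prime field. Putting `ψ` in the first, respectively
  second, set of variables gives two maps `α, β : R → S = k⟦X₁, …, Xₙ, Y₁, …, Yₙ⟧`.
* *The external tensor product.* Put `P = (S ⊗_α M) ⊗_β N`. By the local criterion for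
  flatness (`flat_of_weaklyRegular`), `S ⊗_α M` is flat over `R` through `β` and `S ⊗_β N` is flat
  through `α`. Therefore `depth_S P = depth M + depth N` (`HasDepth.tens_add`).
* *The diagonal.* Let `ts` be the sequence of the `Yⱼ - Xⱼ`, `I` the ideal it generates, and
  `T = S/I`. Both copies of `R` act on `T` in the same way, `T` is flat over `R`, and
  `P/IP = T ⊗ (M ⊗ N)` has depth `depth (M ⊗ N)`.
* *Rigidity.* Let `K` be the image of `(S ⊗_α M) ⊗_β N'` in `X = (S ⊗_α M) ⊗_β G`, where `N'` is the
  kernel of a surjection `G → N` from a free module, so that `P = X/K`. The vanishing of `Tor₁(M, N)` gives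
  `K ∩ IX ⊆ IK` (`range_inf_le`), which says that the first Koszul homology of `ts` on `P` vanishes.
  By Nakayama's lemma `ts` is then a regular sequence on `P` (`rigid`). Hence
  `depth_S P = n + depth (M ⊗ N)`.

Only one `Tor` has to vanish, and rigidity enters in a form that needs neither higher `Tor` nor
Koszul complexes. Depth is handled by the recursive predicate `HasDepth`, in which one regular element is
killed at a time.
-/

open CategoryTheory TensorProduct

/-- The (Krull) dimension of a module: the Krull dimension of `R / ann(M)`. -/
noncomputable def moduleDim (R M : Type) [CommRing R] [AddCommGroup M] [Module R M] :
    WithBot (WithTop ℕ) :=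
  ringKrullDim (R ⧸ Module.annihilator R M)

/-- The depth of a module over a local ring: the supremum of the lengths of
`M`-regular sequences contained in the maximal ideal. -/
noncomputable def moduleDepth (R M : Type) [CommRing R] [IsLocalRing R] [AddCommGroup M]
    [Module R M] : WithBot (WithTop ℕ) :=
  sSup {d | ∃ rs : List R, (∀ r ∈ rs, r ∈ IsLocalRing.maximalIdeal R) ∧
    RingTheory.Sequence.IsRegular M rs ∧ d = (rs.length : WithBot (WithTop ℕ))}

/-- A finitely generated module over a local ring is Cohen–Macaulay if its depth
equals its dimension. -/
def IsCohenMacaulayMod (R M : Type) [CommRing R] [IsLocalRing R] [AddCommGroup M]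
    [Module R M] : Prop :=
  moduleDepth R M = moduleDim R M

/-- A finite free resolution `0 → F_n → ⋯ → F_1 → F_0 → M → 0`, recorded via matrices. -/
structure FiniteFreeResolution (R M : Type) [CommRing R] [AddCommGroup M] [Module R M]
    (n : ℕ) where
  r : ℕ → ℕ
  top : ∀ i, n < i → r i = 0
  mat : ∀ i, Fin (r (i + 1)) → Fin (r i) → R
  augm : Fin (r 0) → M
  augm_surj : ∀ m : M, ∃ z : Fin (r 0) → R, ∑ a, z a • augm a = m
  exact_zero : ∀ z : Fin (r 0) → R, (∑ a, z a • augm a = 0) ↔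
    ∃ w : Fin (r 1) → R, (fun b => ∑ a, mat 0 a b * w a) = z
  exact_succ : ∀ i (z : Fin (r (i + 1)) → R),
    ((fun b => ∑ a, mat i a b * z a) = (0 : Fin (r i) → R)) ↔
      ∃ w : Fin (r (i + 2)) → R, (fun c => ∑ a, mat (i + 1) a c * w a) = z

/-- The projective dimension of a module (over a local ring, where projective = free for
finitely generated modules): the least length of a finite free resolution. -/
noncomputable def projDim (R M : Type) [CommRing R] [AddCommGroup M] [Module R M] :
    WithBot (WithTop ℕ) :=
  sInf {d | ∃ n : ℕ, Nonempty (FiniteFreeResolution R M n) ∧ d = (n : WithBot (WithTop ℕ))}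

/-- A regular local ring: a Noetherian local ring whose maximal ideal is generated by
`dim R` elements. -/
def IsRegularLocal (R : Type) [CommRing R] : Prop :=
  IsNoetherianRing R ∧ ∃ h : IsLocalRing R, ∃ s : Finset R,
    Ideal.span (s : Set R) = @IsLocalRing.maximalIdeal R _ h ∧
    (s.card : WithBot (WithTop ℕ)) = ringKrullDim R

/-! ### Dévissage, depth and the Auslander–Buchsbaum formula -/

namespace CodimTensor
open IsLocalRing

/-- Dévissage over a Noetherian local ring: a property of finitely generated modules holds for all
of them if it holds for `0` and for the residue field, passes to extensions, and lifts from `N/uN`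
to `N` whenever `u ∈ 𝔪` is regular on `N`. Noetherian induction on an ideal in the annihilator
reduces the case `N = R/𝔭`, with `𝔭 ≠ 𝔪`, to `N/uN` for some `u ∈ 𝔪` outside `𝔭`. -/
theorem devissage (R : Type) [CommRing R] [IsLocalRing R] [IsNoetherianRing R]
    (T : (M : Type) → [AddCommGroup M] → [Module R M] → [Module.Finite R M] → Prop)
    (h0 : ∀ (N : Type) [AddCommGroup N] [Module R N] [Module.Finite R N], Subsingleton N → T N)
    (hk : ∀ (N : Type) [AddCommGroup N] [Module R N] [Module.Finite R N],
      (N ≃ₗ[R] R ⧸ maximalIdeal R) → T N)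
    (hex : ∀ (N₁ N₂ N₃ : Type) [AddCommGroup N₁] [Module R N₁] [Module.Finite R N₁]
      [AddCommGroup N₂] [Module R N₂] [Module.Finite R N₂]
      [AddCommGroup N₃] [Module R N₃] [Module.Finite R N₃]
      (f : N₁ →ₗ[R] N₂) (g : N₂ →ₗ[R] N₃), Function.Injective f → Function.Surjective g →
      Function.Exact f g → T N₁ → T N₃ → T N₂)
    (hu : ∀ (N : Type) [AddCommGroup N] [Module R N] [Module.Finite R N] (u : R),
      u ∈ maximalIdeal R → IsSMulRegular N u → T (QuotSMulTop u N) → T N)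
    (M : Type) [AddCommGroup M] [Module R M] [Module.Finite R M] : T M := by
  suffices H : ∀ (I : Ideal R) (M : Type) [AddCommGroup M] [Module R M] [Module.Finite R M],
      I ≤ Module.annihilator R M → T M from H ⊥ M bot_le
  intro I
  induction I using WellFoundedGT.induction with
  | ind I IH =>
    intro M _ _ _ hM
    refine IsNoetherianRing.induction_on_isQuotientEquivQuotientPrime (A := R) (M := M)
      inferInstance (motive := fun N _ _ _ => I ≤ Module.annihilator R N → T N)
      ?_ ?_ ?_ hM
    · intro N _ _ _ hs _; exact h0 N hs
    · intro N _ _ _ p e hI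
      have hp : Module.annihilator R N = p.1 := by
        rw [e.annihilator_eq, Ideal.annihilator_quotient]
      by_cases hmax : p.1 = maximalIdeal R
      · rw [hmax] at e; exact hk N e
      · have hpm : p.1 ≤ maximalIdeal R := le_maximalIdeal p.2.ne_top
        obtain ⟨u, hum, hup⟩ := SetLike.exists_of_lt (lt_of_le_of_ne hpm hmax)
        refine hu N u hum ?_ (IH (I ⊔ Ideal.span {u}) ?_ _ ?_)
        · rw [e.isSMulRegular_congr]
          intro a b hab
          have : u • (a - b) = 0 := by rw [smul_sub, sub_eq_zero]; exact hab
          rw [Algebra.smul_def, mul_eq_zero] at this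
          rcases this with h | h
          · exact absurd (Ideal.Quotient.eq_zero_iff_mem.mp h) hup
          · exact sub_eq_zero.mp h
        · refine lt_of_le_of_ne le_sup_left fun h => hup ?_
          rw [hp] at hI
          exact hI (h ▸ (le_sup_right : Ideal.span {u} ≤ _) (Ideal.mem_span_singleton_self u))
        · rw [sup_le_iff]
          refine ⟨hI.trans (LinearMap.annihilator_le_of_surjective (Submodule.mkQ _)
            (Submodule.mkQ_surjective _)), ?_⟩
          rw [Ideal.span_singleton_le_iff_mem]
          exact QuotSMulTop.mem_annihilator N u
    · intro N₁ _ _ _ N₂ _ _ _ N₃ _ _ _ f g hf hg hfg h1 h3 hI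
      exact hex N₁ N₂ N₃ f g hf hg hfg (h1 (hI.trans (LinearMap.annihilator_le_of_injective f hf)))
        (h3 (hI.trans (LinearMap.annihilator_le_of_surjective g hg)))

/-- The residue field has projective dimension the length of a regular sequence generating `𝔪`. -/
theorem pd_residue (R : Type) [CommRing R] [IsLocalRing R] [IsNoetherianRing R]
    (rs : List R) (hrs : RingTheory.Sequence.IsRegular R rs)
    (hm : Ideal.ofList rs = maximalIdeal R)
    (N : Type) [AddCommGroup N] [Module R N] (e : N ≃ₗ[R] R ⧸ maximalIdeal R) :
    projectiveDimension (ModuleCat.of R N) = rs.length := by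
  rw [← ModuleCat.projectiveDimension_quotient_eq_length.{0} rs hrs]
  apply projectiveDimension_eq_of_iso
  exact (e.trans ((Submodule.quotEquivOfEq _ _ hm.symm).trans
    (Shrink.linearEquiv R _).symm)).toModuleIso

theorem shortExact_of {R : Type} [CommRing R] {A B C : Type} [AddCommGroup A] [AddCommGroup B]
    [AddCommGroup C] [Module R A] [Module R B] [Module R C] (f : A →ₗ[R] B) (g : B →ₗ[R] C)
    (hf : Function.Injective f) (hg : Function.Surjective g) (hfg : Function.Exact f g) :
    (ShortComplex.mk (ModuleCat.ofHom f) (ModuleCat.ofHom g)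
      (by rw [← ModuleCat.ofHom_comp, hfg.linearMap_comp_eq_zero]; rfl)).ShortExact :=
  { exact := by
      rw [ShortComplex.ShortExact.moduleCat_exact_iff_function_exact]
      exact hfg
    mono_f := (ModuleCat.mono_iff_injective _).mpr hf
    epi_g := (ModuleCat.epi_iff_surjective _).mpr hg }

/-- A regular local ring has finite global dimension: its parameters bound every projective
dimension. -/
theorem pd_le (R : Type) [CommRing R] [IsLocalRing R] [IsNoetherianRing R]
    (rs : List R) (hrs : RingTheory.Sequence.IsRegular R rs)
    (hm : Ideal.ofList rs = maximalIdeal R)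
    (M : Type) [AddCommGroup M] [Module R M] [Module.Finite R M] :
    HasProjectiveDimensionLE (ModuleCat.of R M) rs.length := by
  refine devissage R (fun M _ _ _ => HasProjectiveDimensionLE (ModuleCat.of R M) rs.length)
    ?_ ?_ ?_ ?_ M
  · intro N _ _ _ _
    have : HasProjectiveDimensionLT (ModuleCat.of R N) 0 :=
      (ModuleCat.isZero_of_subsingleton (ModuleCat.of R N)).hasProjectiveDimensionLT_zero
    exact hasProjectiveDimensionLT_of_ge _ 0 _ (Nat.zero_le _)
  · intro N _ _ _ e
    rw [← projectiveDimension_le_iff, pd_residue R rs hrs hm N e]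
  · intro N₁ N₂ N₃ _ _ _ _ _ _ _ _ _ f g hf hg hfg h1 h3
    exact (shortExact_of f g hf hg hfg).hasProjectiveDimensionLT_X₂ _ h1 h3
  · intro N _ _ _ u hum hu h
    rw [← projectiveDimension_le_iff] at h ⊢
    rw [ModuleCat.projectiveDimension_quotSMulTop_eq_succ_of_isSMulRegular
      (ModuleCat.of R N) u hu hum] at h
    refine le_trans ?_ h
    exact le_add_of_nonneg_right zero_le_one

/-- `HasDepth R d M` says that `M` has depth `d`, recursively: depth `0` is a nonzero element
killed by `𝔪`, and depth `d + 1` is an element `u ∈ 𝔪` regular on `M` such that `M/uM` has depth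
`d`. The zero module has no depth in this sense. That `d` does not depend on the choices made is
`HasDepth.unique`. -/
def HasDepth (R : Type) [CommRing R] [IsLocalRing R] :
    ℕ → (M : Type) → [AddCommGroup M] → [Module R M] → Prop
  | 0, M, _, _ => ∃ w : M, w ≠ 0 ∧ ∀ r ∈ maximalIdeal R, r • w = 0
  | d + 1, M, _, _ => ∃ u ∈ maximalIdeal R, IsSMulRegular M u ∧ HasDepth R d (QuotSMulTop u M)

theorem HasDepth.congr {R : Type} [CommRing R] [IsLocalRing R] :
    ∀ (d : ℕ) {M N : Type} [AddCommGroup M] [Module R M] [AddCommGroup N] [Module R N]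
      (_ : M ≃ₗ[R] N), HasDepth R d M → HasDepth R d N
  | 0, M, N, _, _, _, _, e, ⟨w, hw, h⟩ =>
    ⟨e w, by simpa using hw, fun r hr => by rw [← map_smul, h r hr, map_zero]⟩
  | d + 1, M, N, _, _, _, _, e, ⟨u, hu, hr, h⟩ =>
    ⟨u, hu, (e.isSMulRegular_congr u).mp hr, HasDepth.congr d (QuotSMulTop.congr u e) h⟩

theorem HasDepth.nontrivial {R : Type} [CommRing R] [IsLocalRing R] :
    ∀ (d : ℕ) {M : Type} [AddCommGroup M] [Module R M], HasDepth R d M → Nontrivial M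
  | 0, M, _, _, ⟨w, hw, _⟩ => ⟨w, 0, hw⟩
  | d + 1, M, _, _, ⟨u, _, _, h⟩ => by
    have := HasDepth.nontrivial d h
    by_contra hM
    rw [not_nontrivial_iff_subsingleton] at hM
    exact not_subsingleton (QuotSMulTop u M) inferInstance

/-- The Auslander–Buchsbaum formula over a regular local ring. In depth `0` a copy of the residue
field sits in `M`; its projective dimension is the global dimension `n`, so that of `M` is `n`
too. -/
theorem HasDepth.pd_add {R : Type} [CommRing R] [IsLocalRing R] [IsNoetherianRing R]
    (rs : List R) (hrs : RingTheory.Sequence.IsRegular R rs)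
    (hm : Ideal.ofList rs = maximalIdeal R) :
    ∀ (d : ℕ) {M : Type} [AddCommGroup M] [Module R M] [Module.Finite R M],
      HasDepth R d M → projectiveDimension (ModuleCat.of R M) + d = rs.length
  | 0, M, _, _, _, ⟨w, hw, h⟩ => by
    simp only [Nat.cast_zero, add_zero]
    apply le_antisymm
    · rw [projectiveDimension_le_iff]
      exact pd_le R rs hrs hm M
    rw [projectiveDimension_ge_iff]
    intro hlt
    have hker : LinearMap.ker (LinearMap.toSpanSingleton R M w) = maximalIdeal R := by
      symm
      refine (maximalIdeal.isMaximal R).eq_of_le ?_ ?_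
      · intro ht
        rw [Ideal.eq_top_iff_one, LinearMap.mem_ker] at ht
        exact hw (by simpa using ht)
      · intro r hr
        simpa using h r hr
    let Q := M ⧸ (LinearMap.range (LinearMap.toSpanSingleton R M w))
    have hQ := pd_le R rs hrs hm Q
    have hse := shortExact_of (LinearMap.range (LinearMap.toSpanSingleton R M w)).subtype
      (LinearMap.range (LinearMap.toSpanSingleton R M w)).mkQ (Submodule.subtype_injective _)
      (Submodule.mkQ_surjective _) (LinearMap.exact_subtype_mkQ _)
    have h1 := hse.hasProjectiveDimensionLT_X₁ rs.length hlt hQ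
    have e : LinearMap.range (LinearMap.toSpanSingleton R M w) ≃ₗ[R] R ⧸ maximalIdeal R :=
      (LinearMap.quotKerEquivRange _).symm.trans (Submodule.quotEquivOfEq _ _ hker)
    have h2 := pd_residue R rs hrs hm _ e
    have h3 := projectiveDimension_lt_iff.mpr h1
    exact absurd h3 (not_lt_of_ge h2.ge)
  | d + 1, M, _, _, _, ⟨u, hu, hr, h⟩ => by
    rw [← HasDepth.pd_add rs hrs hm d h,
      ModuleCat.projectiveDimension_quotSMulTop_eq_succ_of_isSMulRegular
      (ModuleCat.of R M) u hr hu]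
    push_cast
    rw [add_assoc, add_comm (1 : WithBot ℕ∞)]

end CodimTensor

namespace CodimTensor
open IsLocalRing

theorem HasDepth.exists_pd {R : Type} [CommRing R] [IsLocalRing R] [IsNoetherianRing R]
    (rs : List R) (hrs : RingTheory.Sequence.IsRegular R rs)
    (hm : Ideal.ofList rs = maximalIdeal R) (d : ℕ)
    {M : Type} [AddCommGroup M] [Module R M] [Module.Finite R M] (h : HasDepth R d M) :
    ∃ p : ℕ, projectiveDimension (ModuleCat.of R M) = p ∧ p + d = rs.length := by
  have h1 := h.pd_add rs hrs hm
  generalize projectiveDimension (ModuleCat.of R M) = q at h1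
  induction q with
  | bot => simp at h1
  | coe q =>
    induction q with
    | top => exact absurd h1 (by rintro ⟨⟩)
    | coe q => exact ⟨q, rfl, by exact_mod_cast h1⟩

theorem HasDepth.unique {R : Type} [CommRing R] [IsLocalRing R] [IsNoetherianRing R]
    (rs : List R) (hrs : RingTheory.Sequence.IsRegular R rs)
    (hm : Ideal.ofList rs = maximalIdeal R) (d e : ℕ)
    {M : Type} [AddCommGroup M] [Module R M] [Module.Finite R M] (h : HasDepth R d M)
    (h' : HasDepth R e M) : d = e := by
  obtain ⟨p, hp, hd⟩ := h.exists_pd rs hrs hm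
  obtain ⟨q, hq, he⟩ := h'.exists_pd rs hrs hm
  have : p = q := by rw [hp] at hq; exact_mod_cast hq
  omega

/-- Prime avoidance: either `𝔪` is an associated prime of `M` or some element of `𝔪` is regular on
`M`. For `M = 0` the second alternative holds. -/
theorem socle_or_regular (R : Type) [CommRing R] [IsLocalRing R] [IsNoetherianRing R]
    (M : Type) [AddCommGroup M] [Module R M] [Module.Finite R M] :
    (∃ w : M, w ≠ 0 ∧ ∀ r ∈ maximalIdeal R, r • w = 0) ∨
      ∃ u ∈ maximalIdeal R, IsSMulRegular M u := by
  by_cases h : ∃ u ∈ maximalIdeal R, IsSMulRegular M u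
  · exact Or.inr h
  left
  push Not at h
  have hsub : (maximalIdeal R : Set R) ⊆ ⋃ p ∈ associatedPrimes R M, (p : Set R) := by
    rw [biUnion_associatedPrimes_eq_compl_regular]
    intro u hu
    exact h u hu
  have hfin := associatedPrimes.finite R M
  obtain ⟨p, hp, hle⟩ := (Ideal.subset_union_prime_finite hfin ⊥ ⊥
    (fun p hp _ _ => IsAssociatedPrime.isPrime hp)).mp hsub
  have hpm : maximalIdeal R = p := (maximalIdeal.isMaximal R).eq_of_le
    (IsAssociatedPrime.isPrime hp).ne_top hle
  obtain ⟨_, f, hf⟩ := (isAssociatedPrime_iff_exists_injective_linearMap p M).mp hp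
  refine ⟨f (Ideal.Quotient.mk p 1), ?_, fun r hr => ?_⟩
  · rw [Ne, map_eq_zero_iff f hf, Ideal.Quotient.eq_zero_iff_mem]
    exact fun h1 => (IsAssociatedPrime.isPrime hp).ne_top ((Ideal.eq_top_iff_one p).mpr h1)
  · rw [← map_smul, Algebra.smul_def,
      Ideal.Quotient.algebraMap_eq, ← map_mul, mul_one,
      Ideal.Quotient.eq_zero_iff_mem.mpr (hpm ▸ hr), map_zero]

/-- Every nonzero finitely generated module has a depth: killing a regular element raises the
projective dimension by one, which can happen only finitely often. -/
theorem exists_hasDepth {R : Type} [CommRing R] [IsLocalRing R] [IsNoetherianRing R]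
    (rs : List R) (hrs : RingTheory.Sequence.IsRegular R rs)
    (hm : Ideal.ofList rs = maximalIdeal R)
    (M : Type) [AddCommGroup M] [Module R M] [Module.Finite R M] [Nontrivial M] :
    ∃ d, HasDepth R d M := by
  -- `j` bounds the number of regular elements that can still be killed before the projective dimension
  -- would exceed the global dimension.
  suffices H : ∀ (j : ℕ) (M : Type) [AddCommGroup M] [Module R M] [Module.Finite R M]
      [Nontrivial M], ((rs.length + 1 : ℕ) : WithBot ℕ∞) ≤
        projectiveDimension (ModuleCat.of R M) + j → ∃ d, HasDepth R d M by
    refine H (rs.length + 1) M (le_add_of_nonneg_left ?_)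
    rw [← Nat.cast_zero, projectiveDimension_ge_iff, hasProjectiveDimensionLT_zero_iff_isZero,
      ModuleCat.isZero_iff_subsingleton]
    exact not_subsingleton M
  intro j
  induction j with
  | zero =>
    intro M _ _ _ _ h
    have := (projectiveDimension_le_iff _ _).mpr (pd_le R rs hrs hm M)
    rw [Nat.cast_zero, add_zero] at h
    have := h.trans this
    norm_cast at this
    omega
  | succ j ih =>
    intro M _ _ _ _ h
    rcases socle_or_regular R M with hw | ⟨u, hum, hu⟩
    · exact ⟨0, hw⟩
    · have := nontrivial_quotSMulTop_of_mem_maximalIdeal M hum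
      obtain ⟨d, hd⟩ := ih (QuotSMulTop u M) (by
        rw [ModuleCat.projectiveDimension_quotSMulTop_eq_succ_of_isSMulRegular
          (ModuleCat.of R M) u hu hum]
        refine h.trans (le_of_eq ?_)
        push_cast
        rw [add_assoc, add_comm (1 : WithBot ℕ∞)])
      exact ⟨d + 1, u, hum, hu, hd⟩

theorem HasDepth.exists_list {R : Type} [CommRing R] [IsLocalRing R] :
    ∀ (d : ℕ) {M : Type} [AddCommGroup M] [Module R M], HasDepth R d M →
      ∃ rs : List R, (∀ r ∈ rs, r ∈ maximalIdeal R) ∧ RingTheory.Sequence.IsRegular M rs ∧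
        rs.length = d
  | 0, M, _, _, h => by
    have := h.nontrivial
    exact ⟨[], by simp, .nil R M, rfl⟩
  | d + 1, M, _, _, ⟨u, hu, hr, h⟩ => by
    obtain ⟨rs, h1, h2, h3⟩ := h.exists_list
    exact ⟨u :: rs, by simpa using ⟨hu, h1⟩,
      (RingTheory.Sequence.isRegular_cons_iff M u rs).mpr ⟨hr, h2⟩, by simp [h3]⟩

theorem HasDepth.length_le {R : Type} [CommRing R] [IsLocalRing R] [IsNoetherianRing R]
    (rs : List R) (hrs : RingTheory.Sequence.IsRegular R rs)
    (hm : Ideal.ofList rs = maximalIdeal R) :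
    ∀ (us : List R) (d : ℕ) {M : Type} [AddCommGroup M] [Module R M] [Module.Finite R M],
    HasDepth R d M → (∀ u ∈ us, u ∈ maximalIdeal R) → RingTheory.Sequence.IsRegular M us →
      us.length ≤ d
  | [], _, _, _, _, _, _, _, _ => Nat.zero_le _
  | u :: us, d, M, _, _, _, h, hu, hreg => by
    have hM := h.nontrivial
    simp only [List.mem_cons, forall_eq_or_imp] at hu
    rw [RingTheory.Sequence.isRegular_cons_iff] at hreg
    have := nontrivial_quotSMulTop_of_mem_maximalIdeal M hu.1
    obtain ⟨e, he⟩ := exists_hasDepth rs hrs hm (QuotSMulTop u M)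
    have h2 := HasDepth.length_le rs hrs hm us e he hu.2 hreg.2
    have h3 : HasDepth R (e + 1) M := ⟨u, hu.1, hreg.1, he⟩
    rw [h.unique rs hrs hm _ _ h3]
    simpa using h2

/-- `HasDepth` computes the supremum of the lengths of regular sequences in `𝔪`. -/
theorem HasDepth.moduleDepth_eq {R : Type} [CommRing R] [IsLocalRing R] [IsNoetherianRing R]
    (rs : List R) (hrs : RingTheory.Sequence.IsRegular R rs)
    (hm : Ideal.ofList rs = maximalIdeal R) (d : ℕ)
    {M : Type} [AddCommGroup M] [Module R M] [Module.Finite R M]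
    (h : HasDepth R d M) : moduleDepth R M = (d : WithBot (WithTop ℕ)) := by
  apply IsLUB.sSup_eq
  constructor
  · rintro _ ⟨us, h1, h2, rfl⟩
    exact_mod_cast h.length_le rs hrs hm us d h1 h2
  · intro b hb
    obtain ⟨us, h1, h2, h3⟩ := h.exists_list
    exact hb ⟨us, h1, h2, by rw [h3]⟩

end CodimTensor

/-! ### Matrix resolutions and projective dimension -/

namespace CodimTensor
open IsLocalRing

section
variable {R : Type} [CommRing R] {M : Type} [AddCommGroup M] [Module R M]

/-- The augmentation as a linear map. -/
noncomputable def augMap {r : ℕ} (g : Fin r → M) : (Fin r → R) →ₗ[R] M :=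
  Fintype.linearCombination R g

theorem augMap_apply {r : ℕ} (g : Fin r → M) (z : Fin r → R) :
    augMap g z = ∑ a, z a • g a := Fintype.linearCombination_apply R g z

/-- Dropping the first term of a resolution of `M` leaves a resolution of the kernel of its
augmentation. -/
theorem ffr_shift {n : ℕ} (F : FiniteFreeResolution R M (n + 1)) :
    Nonempty (FiniteFreeResolution R (LinearMap.ker (augMap (R := R) F.augm)) n) := by
  have hmem : ∀ a, F.mat 0 a ∈ LinearMap.ker (augMap (R := R) F.augm) := by
    intro a
    rw [LinearMap.mem_ker, augMap_apply, F.exact_zero]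
    exact ⟨Pi.single a 1, by ext b; simp [Pi.single_apply]⟩
  have hval : ∀ z : Fin (F.r 1) → R,
      ((∑ a, z a • (⟨F.mat 0 a, hmem a⟩ : LinearMap.ker (augMap (R := R) F.augm)) :
        LinearMap.ker (augMap (R := R) F.augm)) : Fin (F.r 0) → R) =
      fun b => ∑ a, F.mat 0 a b * z a := by
    intro z
    rw [Submodule.coe_sum]
    ext b
    simp [mul_comm]
  refine ⟨{ r := fun i => F.r (i + 1), top := fun i hi => F.top _ (by omega),
            mat := fun i => F.mat (i + 1), augm := fun a => ⟨F.mat 0 a, hmem a⟩,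
            augm_surj := ?_, exact_zero := ?_, exact_succ := fun i => F.exact_succ (i + 1) }⟩
  · rintro ⟨m, hm⟩
    rw [LinearMap.mem_ker, augMap_apply, F.exact_zero] at hm
    obtain ⟨w, hw⟩ := hm
    exact ⟨w, Subtype.ext ((hval w).trans hw)⟩
  · intro z
    rw [← F.exact_succ 0 z, ← hval z]
    exact (ZeroMemClass.coe_eq_zero).symm

theorem ffr_pd {n : ℕ} : ∀ {M : Type} [AddCommGroup M] [Module R M]
    (_ : FiniteFreeResolution R M n), HasProjectiveDimensionLE (ModuleCat.of R M) n := by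
  induction n with
  | zero =>
    intro M _ _ F
    have hinj : Function.Injective (augMap (R := R) F.augm) := by
      rw [injective_iff_map_eq_zero]
      intro z hz
      rw [augMap_apply, F.exact_zero] at hz
      obtain ⟨w, rfl⟩ := hz
      have : IsEmpty (Fin (F.r 1)) := by rw [F.top 1 (by omega)]; infer_instance
      ext b; simp
    have hsurj : Function.Surjective (augMap (R := R) F.augm) := fun m => by
      obtain ⟨z, hz⟩ := F.augm_surj m
      exact ⟨z, by rw [augMap_apply, hz]⟩
    have : Module.Projective R M :=
      Module.Projective.of_equiv (LinearEquiv.ofBijective _ ⟨hinj, hsurj⟩)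
    rw [← projective_iff_hasProjectiveDimensionLE_zero, ← IsProjective.iff_projective]
    exact this
  | succ n ih =>
    intro M _ _ F
    obtain ⟨G⟩ := ffr_shift F
    have hsurj : Function.Surjective (augMap (R := R) F.augm) := fun m => by
      obtain ⟨z, hz⟩ := F.augm_surj m
      exact ⟨z, by rw [augMap_apply, hz]⟩
    have hse := shortExact_of (LinearMap.ker (augMap (R := R) F.augm)).subtype _
      (Submodule.subtype_injective _) hsurj (LinearMap.exact_subtype_ker_map _)
    have hp : Projective (ModuleCat.of R (Fin (F.r 0) → R)) :=
      (IsProjective.iff_projective (R := R) (P := Fin _ → R)).mp inferInstance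
    exact (hse.hasProjectiveDimensionLT_X₃_iff n hp).mpr (ih G)

/-- Over a Noetherian local ring a projective dimension bound is realised by a resolution of that
length by finite free modules, since finitely generated projective modules are free. -/
theorem pd_ffr [IsLocalRing R] [IsNoetherianRing R] {n : ℕ} :
    ∀ {M : Type} [AddCommGroup M] [Module R M] [Module.Finite R M],
    HasProjectiveDimensionLE (ModuleCat.of R M) n → Nonempty (FiniteFreeResolution R M n) := by
  induction n with
  | zero =>
    intro M _ _ _ h
    rw [← projective_iff_hasProjectiveDimensionLE_zero, ← IsProjective.iff_projective] at h
    have : Module.Projective R M := h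
    have : Module.Free R M := Module.free_of_flat_of_isLocalRing
    let b := Module.finBasis R M
    refine ⟨{ r := fun i => if i = 0 then Module.finrank R M else 0,
              top := fun i hi => by simp; omega,
              mat := fun i _ _ => 0, augm := fun a => b (Fin.cast (by simp) a),
              augm_surj := ?_, exact_zero := ?_, exact_succ := ?_ }⟩
    · intro m
      exact ⟨b.repr m, b.sum_repr m⟩
    · intro z
      simp only [zero_mul, Finset.sum_const_zero]
      constructor
      · intro h
        have := (Fintype.linearIndependent_iff.mp b.linearIndependent) z h
        exact ⟨0, by ext i; exact (this i).symm⟩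
      · rintro ⟨_, rfl⟩
        simp
    · intro i z
      have : IsEmpty (Fin (if i + 1 = 0 then Module.finrank R M else 0)) := by
        simp; infer_instance
      exact ⟨fun _ => ⟨0, Subsingleton.elim _ _⟩, fun _ => by ext b; simp⟩
  | succ n ih =>
    intro M _ _ _ h
    obtain ⟨r, f, hf⟩ := Module.Finite.exists_fin' R M
    have hse := shortExact_of (LinearMap.ker f).subtype _
      (Submodule.subtype_injective _) hf (LinearMap.exact_subtype_ker_map _)
    have hp : Projective (ModuleCat.of R (Fin r → R)) :=
      (IsProjective.iff_projective (R := R) (P := Fin _ → R)).mp inferInstance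
    obtain ⟨F⟩ := ih ((hse.hasProjectiveDimensionLT_X₃_iff n hp).mp h)
    have hfz : ∀ z : Fin r → R, ∑ a, z a • f (Pi.single a 1) = f z := by
      intro z
      conv_rhs => rw [pi_eq_sum_univ z, map_sum]
      refine Finset.sum_congr rfl fun a _ => ?_
      rw [map_smul]
      congr 2
      ext j; simp [Pi.single_apply, eq_comm]
    have hF : ∀ w : Fin (F.r 0) → R, ((∑ a, w a • F.augm a : LinearMap.ker f) : Fin r → R) =
        fun b => ∑ a, (F.augm a : Fin r → R) b * w a := by
      intro w
      rw [Submodule.coe_sum]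
      ext b
      simp [mul_comm]
    refine ⟨{ r := fun i => Nat.casesOn i r F.r
              top := fun i hi => by
                cases i with
                | zero => omega
                | succ i => exact F.top i (by omega)
              mat := fun i => Nat.casesOn i (fun a b => (F.augm a : Fin r → R) b)
                (fun i => F.mat i)
              augm := fun a => f (Pi.single a 1)
              augm_surj := fun m => by
                obtain ⟨z, rfl⟩ := hf m
                exact ⟨z, hfz z⟩
              exact_zero := ?_
              exact_succ := ?_ }⟩
    · intro z
      refine Iff.trans (b := f z = 0) (Eq.congr_left (hfz z)) ?_
      constructor
      · intro hz
        obtain ⟨w, hw⟩ := F.augm_surj ⟨z, hz⟩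
        exact ⟨w, (hF w).symm.trans (congrArg Subtype.val hw)⟩
      · rintro ⟨w, hw⟩
        have h1 := (hF w).trans hw
        rw [← h1]
        exact (∑ a, w a • F.augm a : LinearMap.ker f).2
    · intro i
      cases i with
      | zero =>
        intro z
        refine Iff.trans ?_ (F.exact_zero z)
        rw [← Subtype.coe_inj]
        exact Eq.congr_left (hF z).symm
      | succ i => exact F.exact_succ i

/-- The length of a shortest finite free resolution agrees with Mathlib's projective dimension. -/
theorem projDim_eq [IsLocalRing R] [IsNoetherianRing R] [Module.Finite R M] (p : ℕ)
    (hp : projectiveDimension (ModuleCat.of R M) = p) :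
    projDim R M = (p : WithBot (WithTop ℕ)) := by
  apply IsLeast.csInf_eq
  constructor
  · exact ⟨p, pd_ffr ((projectiveDimension_le_iff _ _).mp hp.le), rfl⟩
  · rintro _ ⟨n, ⟨F⟩, rfl⟩
    have := (projectiveDimension_le_iff _ _).mpr (ffr_pd F)
    rw [hp] at this
    exact_mod_cast this
end
end CodimTensor

/-! ### The local criterion for flatness -/

namespace CodimTensor
open IsLocalRing

section
variable {R : Type} [CommRing R]

/-- `Tor₁(Q, M) = 0`, stated through presentations: `Q ⊗ -` preserves the injectivity of the
kernel of every surjection from a finitely generated module onto `M`. -/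
def TorVan (R : Type) [CommRing R] (Q : Type) [AddCommGroup Q] [Module R Q]
    (M : Type) [AddCommGroup M] [Module R M] : Prop :=
  ∀ (A B : Type) [AddCommGroup A] [Module R A] [AddCommGroup B] [Module R B] [Module.Finite R B]
    (f : A →ₗ[R] B) (g : B →ₗ[R] M), Function.Injective f → Function.Surjective g →
    Function.Exact f g → Function.Injective (f.lTensor Q)

variable {Q : Type} [AddCommGroup Q] [Module R Q] {M N : Type} [AddCommGroup M] [Module R M]
  [AddCommGroup N] [Module R N]

theorem TorVan.congr (h : TorVan R Q M) (e : M ≃ₗ[R] N) : TorVan R Q N := by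
  intro A B _ _ _ _ _ f g hf hg hfg
  refine h A B f (e.symm.toLinearMap ∘ₗ g) hf (e.symm.surjective.comp hg) ?_
  intro b
  simpa using hfg b

theorem TorVan.of_projective [Module.Projective R M] : TorVan R Q M := by
  intro A B _ _ _ _ _ f g hf hg hfg
  obtain ⟨s, hs⟩ := Module.projective_lifting_property g LinearMap.id hg
  have hmem : ∀ b, b - s (g b) ∈ LinearMap.range f := fun b => by
    rw [← LinearMap.exact_iff.mp hfg, LinearMap.mem_ker, map_sub]
    have := LinearMap.congr_fun hs (g b)
    simp only [LinearMap.comp_apply, LinearMap.id_apply] at this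
    rw [this, sub_self]
  let ρ : B →ₗ[R] A := (LinearEquiv.ofInjective f hf).symm.toLinearMap ∘ₗ
    (LinearMap.codRestrict (LinearMap.range f) (LinearMap.id - s ∘ₗ g) hmem)
  have hρ : ρ ∘ₗ f = LinearMap.id := by
    ext a
    apply hf
    have : f (ρ (f a)) = f a - s (g (f a)) := by
      exact congrArg Subtype.val ((LinearEquiv.ofInjective f hf).apply_symm_apply
        (LinearMap.codRestrict (LinearMap.range f) (LinearMap.id - s ∘ₗ g) hmem (f a)))
    simpa [hfg.apply_apply_eq_zero] using this
  have : Function.LeftInverse (ρ.lTensor Q) (f.lTensor Q) := fun z => by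
    rw [← LinearMap.comp_apply, ← LinearMap.lTensor_comp, hρ, LinearMap.lTensor_id,
      LinearMap.id_apply]
  exact this.injective

theorem TorVan.of_subsingleton (h : Subsingleton M) : TorVan R Q M := by
  have : Module.Projective R M := Module.Projective.of_free
  exact TorVan.of_projective

theorem TorVan.of_exact {N₁ N₂ N₃ : Type} [AddCommGroup N₁] [Module R N₁]
    [AddCommGroup N₂] [Module R N₂] [AddCommGroup N₃] [Module R N₃] [IsNoetherianRing R]
    (i : N₁ →ₗ[R] N₂) (p : N₂ →ₗ[R] N₃) (hi : Function.Injective i) (hp : Function.Surjective p)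
    (hip : Function.Exact i p) (h1 : TorVan R Q N₁) (h3 : TorVan R Q N₃) : TorVan R Q N₂ := by
  intro A B _ _ _ _ _ f g hf hg hfg
  let B' := LinearMap.ker (p ∘ₗ g)
  have hA : ∀ a, f a ∈ B' := fun a => by
    simp [B', hfg.apply_apply_eq_zero]
  let f' : A →ₗ[R] B' := LinearMap.codRestrict B' f hA
  have hB : ∀ b : B', g b ∈ LinearMap.range i := fun b => by
    rw [← LinearMap.exact_iff.mp hip]; exact b.2
  let g' : B' →ₗ[R] N₁ := (LinearEquiv.ofInjective i hi).symm.toLinearMap ∘ₗ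
    (LinearMap.codRestrict (LinearMap.range i) (g ∘ₗ B'.subtype) hB)
  have hg' : ∀ b, i (g' b) = g b := fun b =>
    congrArg Subtype.val ((LinearEquiv.ofInjective i hi).apply_symm_apply
        (LinearMap.codRestrict (LinearMap.range i) (g ∘ₗ B'.subtype) hB b))
  have e1 : Function.Injective (f'.lTensor Q) := by
    refine h1 A B' f' g' (fun a b hab => hf (congrArg Subtype.val hab)) (fun n => ?_) ?_
    · obtain ⟨b, hb⟩ := hg (i n)
      exact ⟨⟨b, by simp [B', hb, hip.apply_apply_eq_zero]⟩, hi (by rw [hg', hb])⟩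
    · intro b
      rw [← map_eq_zero_iff i hi, hg', hfg b]
      exact ⟨fun ⟨a, ha⟩ => ⟨a, Subtype.ext ha⟩, fun ⟨a, ha⟩ => ⟨a, congrArg Subtype.val ha⟩⟩
  have e2 : Function.Injective (B'.subtype.lTensor Q) :=
    h3 B' B B'.subtype (p ∘ₗ g) B'.subtype_injective (hp.comp hg) (LinearMap.exact_subtype_ker_map _)
  have : f = B'.subtype ∘ₗ f' := rfl
  rw [this, LinearMap.lTensor_comp]
  exact e2.comp e1

/-- If `Tor₁(Q, M) = 0` and `u` is regular on `Q ⊗ M`, then `Tor₁(Q, M/uM) = 0`. A presentation `B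
→ M/uM` is compared with the presentation `E → M` given by the fibre product `E` of `B` and `M`
over `M/uM`. -/
theorem TorVan.quotSMulTop [IsNoetherianRing R] [Module.Finite R M] (h : TorVan R Q M) (u : R)
    (hQM : IsSMulRegular (Q ⊗[R] M) u) : TorVan R Q (QuotSMulTop u M) := by
  intro A B _ _ _ _ _ f g hf hg hfg
  let q : M →ₗ[R] QuotSMulTop u M := Submodule.mkQ _
  have hq0 : ∀ n, q n = 0 ↔ ∃ n', u • n' = n := fun n => by
    simp only [q, Submodule.mkQ_apply,
      Submodule.Quotient.mk_eq_zero, Submodule.mem_smul_pointwise_iff_exists, Submodule.mem_top,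
      true_and]
  -- the fibre product of `B` and `M` over `M/uM`
  let E := LinearMap.ker (g ∘ₗ LinearMap.fst R B M - q ∘ₗ LinearMap.snd R B M)
  have hE : ∀ b n, (b, n) ∈ E ↔ g b = q n := fun b n => by simp [E, sub_eq_zero]
  have : Module.Finite R E := inferInstance
  let f' : A →ₗ[R] E := LinearMap.codRestrict E (LinearMap.inl R B M ∘ₗ f) (fun a => by
    rw [LinearMap.comp_apply, LinearMap.inl_apply, hE, hfg.apply_apply_eq_zero, map_zero])
  let i : M →ₗ[R] E := LinearMap.codRestrict E (LinearMap.inr R B M ∘ₗ (u • LinearMap.id))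
    (fun n => by
      rw [LinearMap.comp_apply, LinearMap.inr_apply, hE, map_zero, eq_comm, hq0]
      exact ⟨n, rfl⟩)
  let pB : E →ₗ[R] B := LinearMap.fst R B M ∘ₗ E.subtype
  let pM : E →ₗ[R] M := LinearMap.snd R B M ∘ₗ E.subtype
  have e1 : Function.Injective (f'.lTensor Q) := by
    refine h A E f' pM (fun a b hab => hf ?_) ?_ ?_
    · exact congrArg (fun z : E => (z : B × M).1) hab
    · intro n
      obtain ⟨b, hb⟩ := hg (q n)
      exact ⟨⟨(b, n), (hE b n).mpr hb⟩, rfl⟩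
    · rintro ⟨⟨b, n⟩, hbn⟩
      constructor
      · intro hn
        have hn' : n = 0 := hn
        subst hn'
        obtain ⟨a, rfl⟩ := (hfg b).mp (by rw [(hE b 0).mp hbn, map_zero])
        exact ⟨a, rfl⟩
      · rintro ⟨a, ha⟩
        exact (congrArg (fun z : E => (z : B × M).2) ha).symm
  have e2 : Function.Exact i pB := by
    rintro ⟨⟨b, n⟩, hbn⟩
    constructor
    · intro hb
      have hb' : b = 0 := hb
      subst hb'
      obtain ⟨n', rfl⟩ := (hq0 n).mp (by rw [← (hE 0 n).mp hbn, map_zero])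
      exact ⟨n', rfl⟩
    · rintro ⟨a, ha⟩
      exact (congrArg (fun z : E => (z : B × M).1) ha).symm
  have e3 : Function.Surjective pB := fun b => by
    obtain ⟨n, hn⟩ := Submodule.mkQ_surjective _ (g b)
    exact ⟨⟨(b, n), (hE b n).mpr hn.symm⟩, rfl⟩
  rw [injective_iff_map_eq_zero]
  intro z hz
  have hf1 : pB ∘ₗ f' = f := rfl
  have hf2 : pM ∘ₗ f' = 0 := rfl
  have hi2 : pM ∘ₗ i = u • LinearMap.id := rfl
  obtain ⟨y, hy⟩ := (lTensor_exact Q e2 e3 (f'.lTensor Q z)).mp (by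
    rw [← LinearMap.comp_apply, ← LinearMap.lTensor_comp, hf1, hz])
  have hy1 := congrArg (pM.lTensor Q) hy
  rw [← LinearMap.comp_apply, ← LinearMap.lTensor_comp, ← LinearMap.comp_apply,
    ← LinearMap.lTensor_comp, hf2, hi2, LinearMap.lTensor_zero, LinearMap.zero_apply,
    LinearMap.lTensor_smul, LinearMap.lTensor_id] at hy1
  have hy0 : y = 0 := hQM.right_eq_zero_of_smul hy1
  apply e1
  rw [← hy, hy0, map_zero, map_zero]

theorem finite_tensor (S : Type) [CommRing S] [Algebra R S] (Q : Type) [AddCommGroup Q]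
    [Module R Q] [Module S Q] [IsScalarTower R S Q] [Module.Finite S Q] (A : Type)
    [AddCommGroup A] [Module R A] [Module.Finite R A] : Module.Finite S (Q ⊗[R] A) := by
  obtain ⟨n, p, hp⟩ := Module.Finite.exists_fin' R A
  have h1 : Module.Finite S (Q ⊗[R] (Fin n → R)) :=
    Module.Finite.equiv (TensorProduct.piScalarRight R S Q (Fin n)).symm
  exact Module.Finite.of_surjective (AlgebraTensorModule.lTensor S Q p)
    (LinearMap.lTensor_surjective Q hp)

/-- If `u ∈ 𝔪` is regular on `M` and `Tor₁(Q, M/uM) = 0`, then `Tor₁(Q, M) = 0`. Multiplication by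
`u` is surjective on the relevant kernel, which is finitely generated over `S`, so Nakayama's
lemma applies there. -/
theorem TorVan.descend {S : Type} [CommRing S] [IsLocalRing R] [IsNoetherianRing R]
    [IsLocalRing S] [IsNoetherianRing S]
    [Algebra R S] [IsLocalHom (algebraMap R S)] [Module S Q] [IsScalarTower R S Q]
    [Module.Finite S Q] (u : R) (hu : u ∈ maximalIdeal R) (hM : IsSMulRegular M u)
    (h : TorVan R Q (QuotSMulTop u M)) : TorVan R Q M := by
  intro A B _ _ _ _ _ f g hf hg hfg
  have : Module.Finite R A := Module.Finite.of_injective f hf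
  let q : M →ₗ[R] QuotSMulTop u M := Submodule.mkQ _
  let B' := LinearMap.ker (q ∘ₗ g)
  have hA : ∀ a, f a ∈ B' := fun a => by
    simp [B', hfg.apply_apply_eq_zero]
  have hB' : ∀ b, b ∈ B' ↔ ∃ n, u • n = g b := fun b => by
    simp only [B', LinearMap.mem_ker, LinearMap.comp_apply, q, Submodule.mkQ_apply,
      Submodule.Quotient.mk_eq_zero, Submodule.mem_smul_pointwise_iff_exists, Submodule.mem_top,
      true_and]
  let f' : A →ₗ[R] B' := LinearMap.codRestrict B' f hA
  have e2 : Function.Injective (B'.subtype.lTensor Q) :=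
    h B' B B'.subtype (q ∘ₗ g) B'.subtype_injective ((Submodule.mkQ_surjective _).comp hg)
      (LinearMap.exact_subtype_ker_map _)
  have hub : ∀ b, u • b ∈ B' := fun b => by rw [hB']; exact ⟨g b, by simp⟩
  -- `B' = A + uB` is presented by `A × B` with relations `(-ua, a)`, as `u` is regular on `M = B/A`.
  let φ : A × B →ₗ[R] B' := LinearMap.coprod f'
    (LinearMap.codRestrict B' (u • LinearMap.id) hub)
  let ψ : A →ₗ[R] A × B := LinearMap.prod (-(u • LinearMap.id)) f
  have hφ : Function.Surjective φ := by
    rintro ⟨b, hb⟩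
    obtain ⟨n, hn⟩ := (hB' b).mp hb
    obtain ⟨b', rfl⟩ := hg n
    obtain ⟨a, ha⟩ := (hfg (b - u • b')).mp (by rw [map_sub, map_smul, hn, sub_self])
    exact ⟨(a, b'), Subtype.ext (by simp [φ, f', ha])⟩
  have hex : Function.Exact ψ φ := by
    rintro ⟨a, b⟩
    have h0 : φ (a, b) = 0 ↔ f a + u • b = 0 := by
      rw [← Subtype.coe_inj]; simp [φ, f']
    rw [h0]
    constructor
    · intro h1
      have h2 : g b = 0 := by
        apply hM.right_eq_zero_of_smul
        have := congrArg g h1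
        simpa [hfg.apply_apply_eq_zero] using this
      obtain ⟨a', rfl⟩ := (hfg b).mp h2
      refine ⟨a', ?_⟩
      have : a = -(u • a') := by
        apply hf
        rw [map_neg, map_smul]
        exact eq_neg_of_add_eq_zero_left h1
      simp [ψ, this]
    · rintro ⟨a', ha'⟩
      have h1 : -(u • a') = a := congrArg Prod.fst ha'
      have h2 : f a' = b := congrArg Prod.snd ha'
      rw [← h1, ← h2]
      simp
  let F : Q ⊗[R] A →ₗ[S] Q ⊗[R] B := AlgebraTensorModule.lTensor S Q f
  have hF : ∀ z, F z = f.lTensor Q z := fun z => rfl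
  have key : LinearMap.ker F ≤ maximalIdeal S • LinearMap.ker F := by
    intro z hz
    have hz1 : f'.lTensor Q z = 0 := by
      apply e2
      rw [← LinearMap.comp_apply, ← LinearMap.lTensor_comp, map_zero]
      exact hz
    have hz2 : φ.lTensor Q ((LinearMap.inl R A B).lTensor Q z) = 0 := by
      rw [← LinearMap.comp_apply, ← LinearMap.lTensor_comp, LinearMap.coprod_inl, hz1]
    obtain ⟨y, hy⟩ := (lTensor_exact Q hex hφ _).mp hz2
    have hy1 := congrArg ((LinearMap.fst R A B).lTensor Q) hy
    have hy2 := congrArg ((LinearMap.snd R A B).lTensor Q) hy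
    rw [← LinearMap.comp_apply, ← LinearMap.lTensor_comp, ← LinearMap.comp_apply,
      ← LinearMap.lTensor_comp, LinearMap.fst_comp_inl, LinearMap.fst_prod,
      LinearMap.lTensor_id, LinearMap.id_apply, LinearMap.lTensor_neg, LinearMap.lTensor_smul,
      LinearMap.lTensor_id] at hy1
    rw [← LinearMap.comp_apply, ← LinearMap.lTensor_comp, ← LinearMap.comp_apply,
      ← LinearMap.lTensor_comp, LinearMap.snd_comp_inl, LinearMap.snd_prod,
      LinearMap.lTensor_zero, LinearMap.zero_apply] at hy2
    have : z = algebraMap R S (-u) • y := by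
      rw [algebraMap_smul, ← hy1]; simp
    rw [this]
    refine Submodule.smul_mem_smul ?_ hy2
    have : -u ∈ maximalIdeal R := neg_mem hu
    rwa [← IsLocalRing.maximalIdeal_comap (algebraMap R S)] at this
  have := finite_tensor (R := R) S Q A
  have hbot := Submodule.eq_bot_of_le_smul_of_le_jacobson_bot (maximalIdeal S) (LinearMap.ker F)
    (IsNoetherian.noetherian _) key (IsLocalRing.maximalIdeal_le_jacobson _)
  have hF : Function.Injective F := LinearMap.ker_eq_bot.mp hbot
  exact hF

end
end CodimTensor

namespace CodimTensor
open IsLocalRing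

section
variable {R : Type} [CommRing R] [IsNoetherianRing R]

theorem TorVan.quot_list (Q : Type) [AddCommGroup Q] [Module R Q] (us : List R) :
    ∀ (M : Type) [AddCommGroup M] [Module R M] [Module.Finite R M], TorVan R Q M →
      RingTheory.Sequence.IsWeaklyRegular (Q ⊗[R] M) us →
      TorVan R Q (M ⧸ (Ideal.ofList us • ⊤ : Submodule R M)) := by
  induction us with
  | nil =>
    intro M _ _ _ h _
    refine h.congr (Submodule.quotEquivOfEqBot _ ?_).symm
    simp
  | cons u us ih =>
    intro M _ _ _ h h2
    rw [RingTheory.Sequence.isWeaklyRegular_cons_iff] at h2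
    refine (ih (QuotSMulTop u M) (h.quotSMulTop u h2.1) ?_).congr
      (Submodule.quotOfListConsSMulTopEquivQuotSMulTopInner M u us).symm
    exact ((QuotSMulTop.tensorQuotSMulTopEquivQuotSMulTop u Q M).isWeaklyRegular_congr us).mpr h2.2

/-- The local criterion for flatness: if generators of the maximal ideal of `R` form a weakly
regular sequence on a module `Q` which is finite over a local `R`-algebra `S`, then `Q` is flat
over `R`. -/
theorem flat_of_weaklyRegular [IsLocalRing R] (S : Type) [CommRing S] [IsLocalRing S]
    [IsNoetherianRing S] [Algebra R S] [IsLocalHom (algebraMap R S)]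
    (xs : List R) (hm : Ideal.ofList xs = maximalIdeal R)
    (Q : Type) [AddCommGroup Q] [Module R Q] [Module S Q] [IsScalarTower R S Q]
    [Module.Finite S Q] (hQ : RingTheory.Sequence.IsWeaklyRegular Q xs) : Module.Flat R Q := by
  have key : ∀ (M : Type) [AddCommGroup M] [Module R M] [Module.Finite R M], TorVan R Q M := by
    intro M _ _ _
    refine devissage R (fun M _ _ _ => TorVan R Q M) ?_ ?_ ?_ ?_ M
    · intro N _ _ _ h; exact .of_subsingleton h
    · intro N _ _ _ e
      have h1 : TorVan R Q R := .of_projective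
      have h2 := h1.quot_list Q xs R
        (((TensorProduct.rid R Q).isWeaklyRegular_congr xs).mpr hQ)
      refine h2.congr ((Submodule.quotEquivOfEq _ _ ?_).trans e.symm)
      rw [← hm, smul_eq_mul, Ideal.mul_top]
    · intro N₁ N₂ N₃ _ _ _ _ _ _ _ _ _ f g hf hg hfg h1 h3
      exact .of_exact f g hf hg hfg h1 h3
    · intro N _ _ _ u hum hu h
      exact h.descend (S := S) u hum hu
  rw [Module.Flat.iff_lTensor_injective']
  intro I
  exact key (R ⧸ I) I R I.subtype I.mkQ I.subtype_injective (Submodule.mkQ_surjective _)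
    (LinearMap.exact_subtype_mkQ I)

end
end CodimTensor

/-! ### Rigidity -/

namespace CodimTensor
open IsLocalRing RingTheory.Sequence Pointwise

section
variable {S : Type} [CommRing S] [IsLocalRing S] [IsNoetherianRing S]

/-- The inclusion `K ∩ IX ⊆ IK` passes from the sequence `ts, t` to `ts`, by Nakayama's lemma. In
terms of Koszul homology, `H₁(ts, t; X/K) = 0` implies `H₁(ts; X/K) = 0`. -/
theorem rigid_step {X : Type} [AddCommGroup X] [Module S X] [Module.Finite S X]
    (K : Submodule S X) (ts : List S) (t : S) (ht : t ∈ maximalIdeal S)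
    (hreg : IsSMulRegular (X ⧸ (Ideal.ofList ts • ⊤ : Submodule S X)) t)
    (h : K ⊓ Ideal.ofList (ts ++ [t]) • ⊤ ≤ Ideal.ofList (ts ++ [t]) • K) :
    K ⊓ Ideal.ofList ts • ⊤ ≤ Ideal.ofList ts • K := by
  rw [Ideal.ofList_append, Ideal.ofList_singleton, Submodule.sup_smul, Submodule.sup_smul] at h
  refine Submodule.le_of_le_smul_of_le_jacobson_bot (I := maximalIdeal S)
    (IsNoetherian.noetherian _) (maximalIdeal_le_jacobson _) ?_
  rintro l ⟨hlK, hlI⟩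
  obtain ⟨a, ha, b, hb, rfl⟩ := Submodule.mem_sup.mp (h ⟨hlK, Submodule.mem_sup_left hlI⟩)
  rw [Submodule.ideal_span_singleton_smul] at hb
  obtain ⟨k, hk, rfl⟩ := (Submodule.mem_smul_pointwise_iff_exists _ _ _).mp hb
  have ha' : a ∈ (Ideal.ofList ts • ⊤ : Submodule S X) := Submodule.smul_mono le_rfl le_top ha
  have htk : t • k ∈ (Ideal.ofList ts • ⊤ : Submodule S X) := by
    have := sub_mem hlI ha'
    rwa [add_sub_cancel_left] at this
  have hkI := (isSMulRegular_quotient_iff_mem_of_smul_mem _ _).mp hreg k htk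
  exact Submodule.add_mem_sup ha (Submodule.smul_mem_smul ht ⟨hk, hkI⟩)

theorem rigid_first {X : Type} [AddCommGroup X] [Module S X] [Module.Finite S X]
    (K : Submodule S X) (t : S) (ts : List S) (ht : ∀ u ∈ t :: ts, u ∈ maximalIdeal S)
    (hreg : IsWeaklyRegular X (t :: ts))
    (h : K ⊓ Ideal.ofList (t :: ts) • ⊤ ≤ Ideal.ofList (t :: ts) • K) :
    K ⊓ Ideal.ofList [t] • ⊤ ≤ Ideal.ofList [t] • K := by
  induction ts using List.reverseRecOn with
  | nil => exact h
  | append_singleton ts v ih =>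
    rw [← List.cons_append] at hreg h
    rw [isWeaklyRegular_append_iff] at hreg
    refine ih (fun u hu => ht u ?_) hreg.1 ?_
    · rw [← List.cons_append]; exact List.mem_append_left _ hu
    · exact rigid_step K _ v (ht v (by simp)) (isWeaklyRegular_singleton_iff _ _ |>.mp hreg.2) h

/-- Rigidity: let `ts` be weakly regular on `X` with ideal `I`. If `K ∩ IX ⊆ IK`, that is, if the
first Koszul homology of `ts` on `X/K` vanishes, then `ts` is weakly regular on `X/K`. -/
theorem rigid (ts : List S) (ht : ∀ u ∈ ts, u ∈ maximalIdeal S) :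
    ∀ (X : Type) [AddCommGroup X] [Module S X] [Module.Finite S X] (K : Submodule S X),
      IsWeaklyRegular X ts → K ⊓ Ideal.ofList ts • ⊤ ≤ Ideal.ofList ts • K →
      IsWeaklyRegular (X ⧸ K) ts := by
  induction ts with
  | nil => intro X _ _ _ K _ _; exact .nil _ _
  | cons t ts ih =>
    intro X _ _ _ K hreg h
    have h1 := rigid_first K t ts ht hreg h
    rw [Ideal.ofList_singleton, Submodule.ideal_span_singleton_smul,
      Submodule.ideal_span_singleton_smul] at h1
    rw [isWeaklyRegular_cons_iff] at hreg ⊢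
    constructor
    · rw [isSMulRegular_quotient_iff_mem_of_smul_mem]
      intro x hx
      obtain ⟨k, hk, hkx⟩ := (Submodule.mem_smul_pointwise_iff_exists _ _ _).mp
        (h1 ⟨hx, Submodule.smul_mem_pointwise_smul _ _ _ trivial⟩)
      rwa [← hreg.1 hkx]
    · let π : X →ₗ[S] QuotSMulTop t X := Submodule.mkQ _
      have hπ : Function.Surjective π := Submodule.mkQ_surjective _
      have hker : LinearMap.ker π = t • ⊤ := Submodule.ker_mkQ _
      have h2 := ih (fun u hu => ht u (List.mem_cons_of_mem _ hu)) (QuotSMulTop t X)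
        (K.map π) hreg.2 (by
          rintro _ ⟨⟨k, hk, rfl⟩, hk2⟩
          rw [← LinearMap.range_eq_top.mpr hπ, ← Submodule.map_top] at hk2
          have h3 : k ∈ (Ideal.ofList (t :: ts) • ⊤ : Submodule S X) := by
            rw [Ideal.ofList_cons_smul]
            rw [← Submodule.map_smul''] at hk2
            obtain ⟨z, hz, hzk⟩ := hk2
            have : k - z ∈ LinearMap.ker π := by
              rw [LinearMap.mem_ker, map_sub, sub_eq_zero]; exact hzk.symm
            rw [hker] at this
            have := Submodule.add_mem_sup this hz
            rwa [sub_add_cancel] at this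
          have h4 := h ⟨hk, h3⟩
          rw [Ideal.ofList_cons_smul] at h4
          obtain ⟨a, ha, b, hb, rfl⟩ := Submodule.mem_sup.mp h4
          have ha0 : π a = 0 := by
            rw [← LinearMap.mem_ker, hker]
            exact (smul_mono_right t (le_top : K ≤ ⊤)) ha
          rw [map_add, ha0, zero_add, ← Submodule.map_smul'']
          exact ⟨b, hb, rfl⟩)
      refine (LinearEquiv.isWeaklyRegular_congr ?_ ts).mp h2
      have e : K.map π = (K.map (t • ⊤ : Submodule S X).mkQ) := rfl
      refine (Submodule.quotientQuotientEquivQuotientSup (t • ⊤) K).trans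
        ((Submodule.quotEquivOfEq _ _ (sup_comm _ _)).trans
        ((Submodule.quotientQuotientEquivQuotientSup K (t • ⊤)).symm.trans
        (Submodule.quotEquivOfEq _ _ ?_)))
      rw [Submodule.map_pointwise_smul, Submodule.map_top, Submodule.range_mkQ]
end
end CodimTensor

/-! ### Regular sequences on tensor products -/

namespace CodimTensor
open IsLocalRing RingTheory.Sequence Pointwise

section
variable {R : Type} [CommRing R] {S : Type} [CommRing S] [Algebra R S]
  {X X' : Type} [AddCommGroup X] [Module R X] [Module S X] [IsScalarTower R S X]
  [AddCommGroup X'] [Module R X'] [Module S X'] [IsScalarTower R S X']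

/-- The map `φ ⊗ N`, linear over the `R`-algebra `S` that acts on the first factor. -/
noncomputable def tensMap (φ : X →ₗ[S] X') (N : Type) [AddCommGroup N] [Module R N] :
    X ⊗[R] N →ₗ[S] X' ⊗[R] N := AlgebraTensorModule.map φ LinearMap.id

theorem tensMap_apply (φ : X →ₗ[S] X') (N : Type) [AddCommGroup N] [Module R N] (z : X ⊗[R] N) :
    tensMap φ N z = (φ.restrictScalars R).rTensor N z := rfl

theorem tensMap_surjective (φ : X →ₗ[S] X') (hφ : Function.Surjective φ) (N : Type)
    [AddCommGroup N] [Module R N] : Function.Surjective (tensMap (R := R) φ N) :=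
  LinearMap.rTensor_surjective N (g := φ.restrictScalars R) hφ

/-- Tensoring `X/IX` with `N` is the quotient of `X ⊗ N` by `I`. -/
theorem tensMap_ker (φ : X →ₗ[S] X') (hφ : Function.Surjective φ) (I : Ideal S)
    (hI : LinearMap.ker φ = I • ⊤) (N : Type) [AddCommGroup N] [Module R N] :
    LinearMap.ker (tensMap (R := R) φ N) = I • ⊤ := by
  apply le_antisymm
  · intro z hz
    have hex : Function.Exact ((LinearMap.ker φ).subtype.restrictScalars R)
        (φ.restrictScalars R) := LinearMap.exact_subtype_ker_map φ
    obtain ⟨w, rfl⟩ := (rTensor_exact N hex hφ z).mp hz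
    clear hz
    induction w with
    | zero => simp
    | add a b ha hb => rw [map_add]; exact add_mem ha hb
    | tmul a n =>
      obtain ⟨a, ha⟩ := a
      rw [LinearMap.rTensor_tmul]
      change a ⊗ₜ[R] n ∈ _
      rw [hI] at ha
      refine Submodule.smul_induction_on ha (fun i hi x _ => ?_) (fun a b ha hb => ?_)
      · rw [← TensorProduct.smul_tmul']
        exact Submodule.smul_mem_smul hi trivial
      · rw [TensorProduct.add_tmul]; exact add_mem ha hb
  · rw [Submodule.smul_le]
    intro i hi z hz
    clear hz
    rw [LinearMap.mem_ker]
    induction z with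
    | zero => simp
    | add a b ha hb => rw [smul_add, map_add, ha, hb, add_zero]
    | tmul a n =>
      rw [TensorProduct.smul_tmul']
      have : φ (i • a) = 0 := by
        rw [← LinearMap.mem_ker, hI]; exact Submodule.smul_mem_smul hi trivial
      change φ (i • a) ⊗ₜ[R] n = 0
      rw [this, TensorProduct.zero_tmul]

/-- The isomorphism `(X ⊗ N)/y ≃ (X/yX) ⊗ N`, for `y` acting on the first factor. -/
noncomputable def quotTens (y : S) (N : Type) [AddCommGroup N] [Module R N] :
    QuotSMulTop y (X ⊗[R] N) ≃ₗ[S] (QuotSMulTop y X) ⊗[R] N :=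
  (Submodule.quotEquivOfEq _ _ (by
    rw [tensMap_ker (R := R) (y • ⊤ : Submodule S X).mkQ (Submodule.mkQ_surjective _)
      (Ideal.span {y}) (by rw [Submodule.ker_mkQ, Submodule.ideal_span_singleton_smul]) N,
      Submodule.ideal_span_singleton_smul])).trans
  (LinearMap.quotKerEquivOfSurjective (tensMap (R := R) (y • ⊤ : Submodule S X).mkQ N)
    (tensMap_surjective _ (Submodule.mkQ_surjective _) N))

/-- If `y` is regular on `X` and `X/yX` is flat, then `y` stays regular on `X ⊗ N` for every `N`.
-/
theorem smulRegular_tens_of_flat_quot (y : S) (hy : IsSMulRegular X y)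
    (hf : Module.Flat R (QuotSMulTop y X)) (N : Type) [AddCommGroup N] [Module R N] :
    IsSMulRegular (X ⊗[R] N) y := by
  let m : X →ₗ[R] X := (LinearMap.lsmul S X y).restrictScalars R
  let q : X →ₗ[R] QuotSMulTop y X := (y • ⊤ : Submodule S X).mkQ.restrictScalars R
  have hq : Function.Surjective q := fun z => by
    obtain ⟨x, rfl⟩ := Submodule.Quotient.mk_surjective _ z
    exact ⟨x, rfl⟩
  have hq0 : ∀ n, q n = 0 ↔ ∃ n', y • n' = n := fun n => by
    have : q n = 0 ↔ n ∈ (y • ⊤ : Submodule S X) := Submodule.Quotient.mk_eq_zero _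
    rw [this, Submodule.mem_smul_pointwise_iff_exists]
    simp only [Submodule.mem_top, true_and]
  have hex : Function.Exact m q := fun x => hq0 x
  have hm : Function.Injective m := hy
  have h : Function.Injective (m.lTensor N) :=
    LinearMap.lTensor_injective_of_exact_of_flat q hq m hm hex N
  rw [LinearMap.lTensor_inj_iff_rTensor_inj] at h
  have : ∀ z : X ⊗[R] N, m.rTensor N z = y • z := by
    intro z
    induction z with
    | zero => simp
    | add a b ha hb => rw [map_add, ha, hb, smul_add]
    | tmul a n => rfl
  intro a b hab
  exact h (by rw [this, this]; exact hab)

theorem smulRegular_tens_of_flat (y : S) (hy : IsSMulRegular X y)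
    (N : Type) [AddCommGroup N] [Module R N] [Module.Flat R N] :
    IsSMulRegular (X ⊗[R] N) y := by
  let m : X →ₗ[R] X := (LinearMap.lsmul S X y).restrictScalars R
  have h := Module.Flat.rTensor_preserves_injective_linearMap (M := N) m hy
  have : ∀ z : X ⊗[R] N, m.rTensor N z = y • z := by
    intro z
    induction z with
    | zero => simp
    | add a b ha hb => rw [map_add, ha, hb, smul_add]
    | tmul a n => rfl
  intro a b hab
  exact h (by rw [this, this]; exact hab)
end

section
variable {R : Type} [CommRing R] {S : Type} [CommRing S] [Algebra R S]

theorem weaklyRegular_tens_of_flat (N : Type) [AddCommGroup N] [Module R N] [Module.Flat R N]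
    (ys : List S) : ∀ (X : Type) [AddCommGroup X] [Module R X] [Module S X] [IsScalarTower R S X],
      IsWeaklyRegular X ys → IsWeaklyRegular (X ⊗[R] N) ys := by
  induction ys with
  | nil => intro X _ _ _ _ _; exact .nil _ _
  | cons y ys ih =>
    intro X _ _ _ _ h
    rw [isWeaklyRegular_cons_iff] at h ⊢
    exact ⟨smulRegular_tens_of_flat y h.1 N,
      ((quotTens y N).isWeaklyRegular_congr ys).mpr (ih _ h.2)⟩

variable [IsLocalRing R] [IsNoetherianRing R] [IsLocalRing S] [IsNoetherianRing S]
  [IsLocalHom (algebraMap R S)]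

theorem map_mem_max {xs : List R} (hxs : Ideal.ofList xs = maximalIdeal R) :
    ∀ u ∈ xs.map (algebraMap R S), u ∈ maximalIdeal S := by
  intro u hu
  obtain ⟨r, hr, rfl⟩ := List.mem_map.mp hu
  have : r ∈ maximalIdeal R := hxs ▸ Ideal.subset_span hr
  rwa [← IsLocalRing.maximalIdeal_comap (algebraMap R S)] at this

/-- If `ys`, followed by generators of the maximal ideal of `R`, is weakly regular on `X`, then so
are the generators alone, by permuting the sequence, and `X` is flat over `R`. -/
theorem flat_of_append {xs : List R} (hxs : Ideal.ofList xs = maximalIdeal R)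
    (ys : List S) (hys : ∀ y ∈ ys, y ∈ maximalIdeal S)
    (X : Type) [AddCommGroup X] [Module R X] [Module S X] [IsScalarTower R S X]
    [Module.Finite S X] (h : IsWeaklyRegular X (ys ++ xs.map (algebraMap R S))) :
    Module.Flat R X := by
  have h2 := IsLocalRing.isWeaklyRegular_of_perm_of_subset_maximalIdeal h
    (List.perm_append_comm) (by
      intro r hr
      rcases List.mem_append.mp hr with h | h
      · exact hys r h
      · exact map_mem_max hxs r h)
  rw [isWeaklyRegular_append_iff] at h2
  exact flat_of_weaklyRegular S xs hxs X ((isWeaklyRegular_map_algebraMap_iff _ _ _).mp h2.1)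

/-- If `ys` is weakly regular on `X` and remains part of a weakly regular sequence after appending
generators of the maximal ideal of `R`, then `ys` is weakly regular on `X ⊗ N` for every
`R`-module `N`. -/
theorem weaklyRegular_tens {xs : List R} (hxs : Ideal.ofList xs = maximalIdeal R)
    (N : Type) [AddCommGroup N] [Module R N]
    (ys : List S) (hys : ∀ y ∈ ys, y ∈ maximalIdeal S) :
    ∀ (X : Type) [AddCommGroup X] [Module R X] [Module S X] [IsScalarTower R S X]
      [Module.Finite S X], IsWeaklyRegular X (ys ++ xs.map (algebraMap R S)) →
      IsWeaklyRegular (X ⊗[R] N) ys := by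
  induction ys with
  | nil => intro X _ _ _ _ _ _; exact .nil _ _
  | cons y ys ih =>
    intro X _ _ _ _ _ h
    simp only [List.mem_cons, forall_eq_or_imp] at hys
    rw [List.cons_append, isWeaklyRegular_cons_iff] at h
    rw [isWeaklyRegular_cons_iff]
    exact ⟨smulRegular_tens_of_flat_quot y h.1 (flat_of_append hxs ys hys.2 _ h.2) N,
      ((quotTens y N).isWeaklyRegular_congr ys).mpr (ih hys.2 _ h.2)⟩

end
end CodimTensor

/-! ### Depth of tensor products -/

namespace CodimTensor
open IsLocalRing RingTheory.Sequence Pointwise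

theorem HasDepth.of_weaklyRegular {S : Type} [CommRing S] [IsLocalRing S] (ts : List S)
    (hts : ∀ t ∈ ts, t ∈ maximalIdeal S) (r : ℕ) :
    ∀ (P : Type) [AddCommGroup P] [Module S P], IsWeaklyRegular P ts →
      HasDepth S r (P ⧸ (Ideal.ofList ts • ⊤ : Submodule S P)) → HasDepth S (ts.length + r) P := by
  induction ts with
  | nil =>
    intro P _ _ _ h
    rw [List.length_nil, zero_add]
    exact h.congr r (Submodule.quotEquivOfEqBot _ (by simp))
  | cons t ts ih =>
    intro P _ _ hreg h
    simp only [List.mem_cons, forall_eq_or_imp] at hts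
    rw [isWeaklyRegular_cons_iff] at hreg
    have e : (t :: ts).length + r = ts.length + r + 1 := by rw [List.length_cons]; omega
    rw [e]
    exact ⟨t, hts.1, hreg.1, ih hts.2 _ hreg.2
      (h.congr r (Submodule.quotOfListConsSMulTopEquivQuotSMulTopInner P t ts))⟩

section
variable {R : Type} [CommRing R] {S : Type} [CommRing S] [Algebra R S]

/-- For a flat module `X`, the element `x ⊗ w` is nonzero for a nonzero socle element `w` and `x ∉
𝔪X`: the submodule generated by `w` is the residue field, so `X/𝔪X` embeds in `X ⊗ W`. -/
theorem tmul_ne_zero_of_flat [IsLocalRing R] {X : Type} [AddCommGroup X] [Module R X]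
    [Module.Flat R X]
    {W : Type} [AddCommGroup W] [Module R W] (x : X)
    (hx : x ∉ (maximalIdeal R • ⊤ : Submodule R X)) (w : W) (hw : w ≠ 0)
    (hmw : ∀ r ∈ maximalIdeal R, r • w = 0) : x ⊗ₜ[R] w ≠ 0 := by
  let φ : (R ⧸ maximalIdeal R) →ₗ[R] W :=
    (maximalIdeal R).liftQ (LinearMap.toSpanSingleton R W w) (fun r hr => by
      rw [LinearMap.mem_ker, LinearMap.toSpanSingleton_apply]; exact hmw r hr)
  have hφ : Function.Injective φ := by
    rw [← LinearMap.ker_eq_bot, LinearMap.ker_eq_bot']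
    intro z hz
    obtain ⟨r, rfl⟩ := Ideal.Quotient.mk_surjective z
    have hr : r • w = 0 := hz
    rw [Ideal.Quotient.eq_zero_iff_mem, mem_maximalIdeal]
    intro hu
    exact hw (by simpa using (hu.smul_eq_zero).mp hr)
  have hinj := Module.Flat.lTensor_preserves_injective_linearMap (M := X) φ hφ
  intro h0
  have h1 : φ.lTensor X (x ⊗ₜ (Ideal.Quotient.mk (maximalIdeal R) 1)) = 0 := by
    rw [LinearMap.lTensor_tmul]
    have : φ (Ideal.Quotient.mk (maximalIdeal R) 1) = w := one_smul R w
    rw [this, h0]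
  rw [← map_zero (φ.lTensor X)] at h1
  have h2 := hinj h1
  have h3 := tensorQuotEquivQuotSMul_tmul_mk (maximalIdeal R) x 1
  rw [h2, map_zero, one_smul] at h3
  exact hx ((Submodule.Quotient.mk_eq_zero _).mp h3.symm)

/-- The isomorphism `(Q ⊗ M)/u ≃ Q ⊗ (M/uM)` over `S`, for `u ∈ R` acting on the second factor. -/
noncomputable def tensQuot (u : R) (Q : Type) [AddCommGroup Q] [Module R Q] [Module S Q]
    [IsScalarTower R S Q] (M : Type) [AddCommGroup M] [Module R M] :
    QuotSMulTop (algebraMap R S u) (Q ⊗[R] M) ≃ₗ[S] Q ⊗[R] QuotSMulTop u M :=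
  let q : M →ₗ[R] QuotSMulTop u M := (u • ⊤ : Submodule R M).mkQ
  let F : Q ⊗[R] M →ₗ[S] Q ⊗[R] QuotSMulTop u M := AlgebraTensorModule.lTensor S Q q
  (Submodule.quotEquivOfEq _ (LinearMap.ker F) (by
    let m : M →ₗ[R] M := LinearMap.lsmul R M u
    have hex : Function.Exact m q := fun x => by
      have : q x = 0 ↔ x ∈ (u • ⊤ : Submodule R M) := Submodule.Quotient.mk_eq_zero _
      rw [this, Submodule.mem_smul_pointwise_iff_exists]
      simp only [Submodule.mem_top, true_and]
      rfl
    have hT := lTensor_exact Q hex (Submodule.mkQ_surjective _)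
    have hm : ∀ z : Q ⊗[R] M, m.lTensor Q z = algebraMap R S u • z := by
      intro z
      rw [algebraMap_smul]
      induction z with
      | zero => simp
      | add a b ha hb => rw [map_add, ha, hb, smul_add]
      | tmul a n => rw [LinearMap.lTensor_tmul, TensorProduct.smul_tmul', TensorProduct.smul_tmul]; rfl
    ext z
    rw [Submodule.mem_smul_pointwise_iff_exists, LinearMap.mem_ker]
    have h1 : F z = 0 ↔ z ∈ Set.range (m.lTensor Q) := hT z
    rw [h1]
    constructor
    · rintro ⟨w, -, rfl⟩; exact ⟨w, hm w⟩
    · rintro ⟨w, rfl⟩; exact ⟨w, trivial, (hm w).symm⟩)).trans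
  (LinearMap.quotKerEquivOfSurjective F
    (LinearMap.lTensor_surjective Q (Submodule.mkQ_surjective _)))

theorem regular_tens_of_flat (u : R) (Q : Type) [AddCommGroup Q] [Module R Q] [Module S Q]
    [IsScalarTower R S Q] [Module.Flat R Q] (M : Type) [AddCommGroup M] [Module R M]
    (hu : IsSMulRegular M u) : IsSMulRegular (Q ⊗[R] M) (algebraMap R S u) := by
  let m : M →ₗ[R] M := LinearMap.lsmul R M u
  have hm : ∀ z : Q ⊗[R] M, m.lTensor Q z = algebraMap R S u • z := by
    intro z
    rw [algebraMap_smul]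
    induction z with
    | zero => simp
    | add a b ha hb => rw [map_add, ha, hb, smul_add]
    | tmul a n => rw [LinearMap.lTensor_tmul, TensorProduct.smul_tmul', TensorProduct.smul_tmul]; rfl
  have h := Module.Flat.lTensor_preserves_injective_linearMap (M := Q) m hu
  intro a b hab
  exact h (by rw [hm, hm]; exact hab)

variable [IsLocalRing R] [IsLocalRing S] [IsLocalHom (algebraMap R S)]

/-- Tensoring with a module flat over `R` raises every depth by `j` as soon as it does so in depth
zero: regular elements stay regular. -/
theorem HasDepth.tens_flat (Q : Type) [AddCommGroup Q] [Module R Q] [Module S Q]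
    [IsScalarTower R S Q] [Module.Flat R Q] (j : ℕ)
    (base : ∀ (W : Type) [AddCommGroup W] [Module R W] [Module.Finite R W], HasDepth R 0 W → HasDepth S j (Q ⊗[R] W)) :
    ∀ (r : ℕ) (W : Type) [AddCommGroup W] [Module R W] [Module.Finite R W], HasDepth R r W →
      HasDepth S (r + j) (Q ⊗[R] W) := by
  intro r
  induction r with
  | zero => intro W _ _ _ h; rw [zero_add]; exact base W h
  | succ r ih =>
    rintro W _ _ _ ⟨u, hu, hreg, h⟩
    rw [add_right_comm]
    refine ⟨algebraMap R S u, ?_, regular_tens_of_flat u Q W hreg,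
      (ih _ h).congr _ (tensQuot u Q W).symm⟩
    rwa [← IsLocalRing.maximalIdeal_comap (algebraMap R S)] at hu

end
end CodimTensor

namespace CodimTensor
open IsLocalRing RingTheory.Sequence Pointwise

/-- The class of `1` in `S/I` does not lie in `𝔪_R (S/I)`, because `R → S` is local. -/
theorem one_notMem {R : Type} [CommRing R] {S : Type} [CommRing S] [Algebra R S]
    [IsLocalRing R] [IsLocalRing S] [IsLocalHom (algebraMap R S)] (I : Ideal S)
    (hI : I ≤ maximalIdeal S) :
    (Submodule.Quotient.mk 1 : S ⧸ (I • ⊤ : Submodule S S)) ∉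
      (maximalIdeal R • ⊤ : Submodule R (S ⧸ (I • ⊤ : Submodule S S))) := by
  have hI' : (I • ⊤ : Submodule S S) ≤ maximalIdeal S := by
    rw [Submodule.smul_le]
    intro i hi s _
    exact Ideal.mul_mem_right _ _ (hI hi)
  intro h1
  have key : ∀ s : S, (Submodule.Quotient.mk s : S ⧸ (I • ⊤ : Submodule S S)) =
      Submodule.Quotient.mk 1 → s ∈ maximalIdeal S := by
    refine Submodule.smul_induction_on
      (p := fun z => ∀ s : S, (Submodule.Quotient.mk s : S ⧸ (I • ⊤ : Submodule S S)) = z →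
        s ∈ maximalIdeal S) h1 ?_ ?_
    · intro r hr z _ s hs
      obtain ⟨z, rfl⟩ := Submodule.Quotient.mk_surjective _ z
      rw [← Submodule.Quotient.mk_smul, Submodule.Quotient.eq] at hs
      have h2 : r • z ∈ maximalIdeal S := by
        rw [Algebra.smul_def]
        rw [← IsLocalRing.maximalIdeal_comap (algebraMap R S)] at hr
        exact Ideal.mul_mem_right _ _ hr
      simpa using add_mem (hI' hs) h2
    · intro a b ha hb s hs
      obtain ⟨a, rfl⟩ := Submodule.Quotient.mk_surjective _ a
      obtain ⟨b, rfl⟩ := Submodule.Quotient.mk_surjective _ b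
      rw [← Submodule.Quotient.mk_add, Submodule.Quotient.eq] at hs
      simpa using add_mem (hI' hs) (add_mem (ha a rfl) (hb b rfl))
  exact (Ideal.ne_top_iff_one _).mp (maximalIdeal.isMaximal S).ne_top (key 1 rfl)

theorem smul_eq_zero_of_map {R : Type} [CommRing R] {S : Type} [CommRing S] [Algebra R S]
    (J : Ideal R) {Z : Type} [AddCommGroup Z] [Module S Z] (z : Z)
    (h : ∀ r ∈ J, algebraMap R S r • z = 0) : ∀ b ∈ J.map (algebraMap R S), b • z = 0 := by
  intro b hb
  have hle : J.map (algebraMap R S) ≤ LinearMap.ker (LinearMap.toSpanSingleton S Z z) := by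
    rw [Ideal.map_le_iff_le_comap]
    intro r hr
    exact h r hr
  exact hle hb

/-- If `S/I` is flat over `R` and the maximal ideal of `S` is generated by `I` and that of `R`,
then tensoring with `S/I` preserves depth. -/
theorem HasDepth.tens_quot {R : Type} [CommRing R] {S : Type} [CommRing S] [Algebra R S]
    [IsLocalRing R] [IsLocalRing S] [IsLocalHom (algebraMap R S)] (I : Ideal S)
    (hI : I ≤ maximalIdeal S) (hm : maximalIdeal S = I ⊔ (maximalIdeal R).map (algebraMap R S))
    [Module.Flat R (S ⧸ (I • ⊤ : Submodule S S))]
    (r : ℕ) (W : Type) [AddCommGroup W] [Module R W] [Module.Finite R W] (h : HasDepth R r W) :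
    HasDepth S r ((S ⧸ (I • ⊤ : Submodule S S)) ⊗[R] W) := by
  refine HasDepth.tens_flat _ 0 ?_ r W h
  rintro W _ _ _ ⟨w, hw, hmw⟩
  refine ⟨Submodule.Quotient.mk 1 ⊗ₜ w, tmul_ne_zero_of_flat _ (one_notMem I hI) w hw hmw, ?_⟩
  intro s hs
  rw [hm] at hs
  obtain ⟨a, ha, b, hb, rfl⟩ := Submodule.mem_sup.mp hs
  rw [add_smul]
  have h1 : a • ((Submodule.Quotient.mk 1 : S ⧸ (I • ⊤ : Submodule S S)) ⊗ₜ[R] w) = 0 := by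
    rw [TensorProduct.smul_tmul', ← Submodule.Quotient.mk_smul,
      (Submodule.Quotient.mk_eq_zero _).mpr
        (Submodule.smul_mem_smul ha (Submodule.mem_top (x := (1 : S)))), zero_tmul]
  have h2 : b • ((Submodule.Quotient.mk 1 : S ⧸ (I • ⊤ : Submodule S S)) ⊗ₜ[R] w) = 0 := by
    refine smul_eq_zero_of_map (maximalIdeal R)
      ((Submodule.Quotient.mk 1 : S ⧸ (I • ⊤ : Submodule S S)) ⊗ₜ[R] w) (fun r hr => ?_) b hb
    rw [algebraMap_smul, ← TensorProduct.tmul_smul, hmw r hr, tmul_zero]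
  rw [h1, h2, add_zero]

section
variable {R₁ R₂ S : Type} [CommRing R₁] [CommRing R₂] [CommRing S] [Algebra R₁ S] [Algebra R₂ S]
  [SMulCommClass R₁ R₂ S] [IsLocalRing R₁] [IsLocalRing R₂] [IsLocalRing S]
  [IsLocalHom (algebraMap R₁ S)] [IsLocalHom (algebraMap R₂ S)]

/-- Exchange of the two factors of an external tensor product. -/
noncomputable def tensSwap [SMulCommClass R₂ R₁ S] (M N : Type) [AddCommGroup M] [Module R₁ M]
    [AddCommGroup N] [Module R₂ N] :
    (S ⊗[R₂] N) ⊗[R₁] M ≃ₗ[S] (S ⊗[R₁] M) ⊗[R₂] N :=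
  (AlgebraTensorModule.cancelBaseChange R₁ S S (S ⊗[R₂] N) M).symm ≪≫ₗ
    TensorProduct.comm S _ _ ≪≫ₗ AlgebraTensorModule.cancelBaseChange R₂ S S (S ⊗[R₁] M) N


/-- If `v` and `w` are nonzero socle elements of `M` and `N`, then `(1 ⊗ v) ⊗ w` is one of the
external tensor product, by flatness. -/
theorem HasDepth.tens_zero [IsNoetherianRing R₁] [IsNoetherianRing R₂] [IsNoetherianRing S]
    {x₁ : List R₁} (hx₁ : Ideal.ofList x₁ = maximalIdeal R₁)
    {x₂ : List R₂} (hx₂ : Ideal.ofList x₂ = maximalIdeal R₂)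
    (h12 : IsWeaklyRegular S (x₂.map (algebraMap R₂ S) ++ x₁.map (algebraMap R₁ S)))
    (hm : maximalIdeal S = (maximalIdeal R₁).map (algebraMap R₁ S) ⊔
      (maximalIdeal R₂).map (algebraMap R₂ S))
    (M N : Type) [AddCommGroup M] [Module R₁ M] [AddCommGroup N] [Module R₂ N]
    [Module.Flat R₂ (S ⊗[R₁] M)]
    (h : HasDepth R₁ 0 M) (h' : HasDepth R₂ 0 N) : HasDepth S 0 ((S ⊗[R₁] M) ⊗[R₂] N) := by
  obtain ⟨v, hv, hmv⟩ := h
  obtain ⟨w, hw, hmw⟩ := h'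
  set I : Ideal S := Ideal.ofList (x₂.map (algebraMap R₂ S)) with hIdef
  have hImap : I = (maximalIdeal R₂).map (algebraMap R₂ S) := by
    rw [hIdef, ← hx₂, Ideal.map_ofList]
  have hI : I ≤ maximalIdeal S := by rw [hImap, hm]; exact le_sup_right
  have hfl : Module.Flat R₁ (S ⧸ (I • ⊤ : Submodule S S)) := by
    rw [isWeaklyRegular_append_iff] at h12
    exact flat_of_weaklyRegular S x₁ hx₁ _ ((isWeaklyRegular_map_algebraMap_iff _ _ _).mp h12.2)
  have hne : (Submodule.Quotient.mk 1 : S ⧸ (I • ⊤ : Submodule S S)) ⊗ₜ[R₁] v ≠ 0 :=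
    tmul_ne_zero_of_flat _ (one_notMem I hI) v hv hmv
  have hnot : (1 : S) ⊗ₜ[R₁] v ∉ (maximalIdeal R₂ • ⊤ : Submodule R₂ (S ⊗[R₁] M)) := by
    intro hmem
    apply hne
    have hker := tensMap_ker (R := R₁) (I • ⊤ : Submodule S S).mkQ (Submodule.mkQ_surjective _) I
      (Submodule.ker_mkQ _) M
    have : (1 : S) ⊗ₜ[R₁] v ∈ (I • ⊤ : Submodule S (S ⊗[R₁] M)) := by
      refine Submodule.smul_induction_on hmem (fun r hr z _ => ?_) (fun a b ha hb => add_mem ha hb)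
      rw [← algebraMap_smul S r z]
      refine Submodule.smul_mem_smul ?_ trivial
      rw [hImap]; exact Ideal.mem_map_of_mem _ hr
    rw [← hker, LinearMap.mem_ker] at this
    exact this
  refine ⟨((1 : S) ⊗ₜ v) ⊗ₜ w, tmul_ne_zero_of_flat _ hnot w hw hmw, ?_⟩
  intro s hs
  rw [hm] at hs
  obtain ⟨a, ha, b, hb, rfl⟩ := Submodule.mem_sup.mp hs
  rw [add_smul, smul_eq_zero_of_map (maximalIdeal R₁) (((1 : S) ⊗ₜ[R₁] v) ⊗ₜ[R₂] w) (fun r hr => ?_) a ha,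
    smul_eq_zero_of_map (maximalIdeal R₂) (((1 : S) ⊗ₜ[R₁] v) ⊗ₜ[R₂] w) (fun r hr => ?_) b hb,
    add_zero]
  · rw [algebraMap_smul, ← TensorProduct.tmul_smul, hmw r hr, tmul_zero]
  · rw [TensorProduct.smul_tmul', algebraMap_smul, ← TensorProduct.tmul_smul, hmv r hr, tmul_zero,
      zero_tmul]

/-- Depth is additive on external tensor products. Flatness of `S ⊗ M` over `R₂` and, after
exchanging the factors, of `S ⊗ N` over `R₁` reduces the claim to depth zero for both. -/
theorem HasDepth.tens_add [IsNoetherianRing R₁] [IsNoetherianRing R₂] [IsNoetherianRing S]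
    [SMulCommClass R₂ R₁ S]
    {x₁ : List R₁} (hx₁ : Ideal.ofList x₁ = maximalIdeal R₁)
    {x₂ : List R₂} (hx₂ : Ideal.ofList x₂ = maximalIdeal R₂)
    (h12 : IsWeaklyRegular S (x₂.map (algebraMap R₂ S) ++ x₁.map (algebraMap R₁ S)))
    (hm : maximalIdeal S = (maximalIdeal R₁).map (algebraMap R₁ S) ⊔
      (maximalIdeal R₂).map (algebraMap R₂ S))
    (M N : Type) [AddCommGroup M] [Module R₁ M] [AddCommGroup N] [Module R₂ N]
    [Module.Finite R₁ M] [Module.Finite R₂ N] (d e : ℕ)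
    (h : HasDepth R₁ d M) (h' : HasDepth R₂ e N) :
    HasDepth S (d + e) ((S ⊗[R₁] M) ⊗[R₂] N) := by
  have h21 : IsWeaklyRegular S (x₁.map (algebraMap R₁ S) ++ x₂.map (algebraMap R₂ S)) := by
    refine IsLocalRing.isWeaklyRegular_of_perm_of_subset_maximalIdeal h12 List.perm_append_comm ?_
    intro r hr
    rcases List.mem_append.mp hr with h | h
    · exact map_mem_max hx₂ r h
    · exact map_mem_max hx₁ r h
  have hfN : Module.Flat R₁ (S ⊗[R₂] N) := by
    have := finite_tensor S S (R := R₂) N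
    exact flat_of_weaklyRegular S x₁ hx₁ _ ((isWeaklyRegular_map_algebraMap_iff _ _ _).mp
      (weaklyRegular_tens hx₂ N _ (map_mem_max hx₁) S h21))
  refine (HasDepth.tens_flat (S ⊗[R₂] N) e ?_ d M h).congr _ (tensSwap M N)
  intro M' _ _ _ hM'
  have hfM : Module.Flat R₂ (S ⊗[R₁] M') := by
    have := finite_tensor S S (R := R₁) M'
    exact flat_of_weaklyRegular S x₂ hx₂ _ ((isWeaklyRegular_map_algebraMap_iff _ _ _).mp
      (weaklyRegular_tens hx₁ M' _ (map_mem_max hx₂) S h12))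
  have hd : HasDepth S (e + 0) ((S ⊗[R₁] M') ⊗[R₂] N) := by
    refine HasDepth.tens_flat (S ⊗[R₁] M') 0 ?_ e N h'
    intro N' _ _ _ hN'
    exact HasDepth.tens_zero hx₁ hx₂ h12 hm M' N' hM' hN'
  exact hd.congr e (tensSwap (R₁ := R₁) (R₂ := R₂) (S := S) M' N).symm

end
end CodimTensor

/-! ### Restriction to the diagonal -/

namespace CodimTensor
open IsLocalRing RingTheory.Sequence Pointwise

section
variable {R₁ R₂ S : Type} [CommRing R₁] [CommRing R₂] [CommRing S] [Algebra R₁ S] [Algebra R₂ S]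
  [SMulCommClass R₁ R₂ S] [Algebra R₁ R₂]
  {T : Type} [AddCommGroup T] [Module S T] [Module R₁ T] [Module R₂ T]
  [IsScalarTower R₁ S T] [IsScalarTower R₂ S T] [IsScalarTower R₁ R₂ T]

/-- On a module `T` where the actions of `R₁` and `R₂` agree, `(T ⊗ M) ⊗ N = T ⊗ (M ⊗ N)`. -/
noncomputable def diagEquiv (hsurj : Function.Surjective (algebraMap R₁ R₂))
    (M N : Type) [AddCommGroup M] [Module R₁ M]
    [AddCommGroup N] [Module R₁ N] [Module R₂ N] [IsScalarTower R₁ R₂ N] :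
    (T ⊗[R₁] M) ⊗[R₂] N ≃ₗ[S] T ⊗[R₁] (M ⊗[R₁] N) :=
  have : TensorProduct.CompatibleSMul R₁ R₂ (T ⊗[R₁] M) N := ⟨fun r x n => by
    obtain ⟨r, rfl⟩ := hsurj r
    rw [algebraMap_smul, algebraMap_smul, TensorProduct.smul_tmul]⟩
  have : SMulCommClass R₁ R₂ (T ⊗[R₁] M) := inferInstance
  have : SMulCommClass R₁ S (T ⊗[R₁] M) := inferInstance
  have : SMulCommClass R₂ S (T ⊗[R₁] M) := inferInstance
  (TensorProduct.equivOfCompatibleSMul R₁ R₂ S (T ⊗[R₁] M) N) ≪≫ₗ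
    AlgebraTensorModule.assoc R₁ R₁ S T M N

/-- Injectivity of `M ⊗ N' → M ⊗ G` is inherited by the base change to the flat diagonal module
`T`. -/
theorem diag_injective [Module.Flat R₁ T] (hsurj : Function.Surjective (algebraMap R₁ R₂))
    (M N' G : Type) [AddCommGroup M] [Module R₁ M]
    [AddCommGroup N'] [Module R₁ N'] [Module R₂ N'] [IsScalarTower R₁ R₂ N']
    [AddCommGroup G] [Module R₁ G] [Module R₂ G] [IsScalarTower R₁ R₂ G]
    (f : N' →ₗ[R₂] G) (hinj : Function.Injective ((f.restrictScalars R₁).lTensor M)) :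
    Function.Injective (AlgebraTensorModule.lTensor S (T ⊗[R₁] M) f) := by
  have h := Module.Flat.lTensor_preserves_injective_linearMap (M := T) _ hinj
  have hcomm : ∀ z, diagEquiv (T := T) (S := S) hsurj M G (AlgebraTensorModule.lTensor S (T ⊗[R₁] M) f z) =
      ((f.restrictScalars R₁).lTensor M).lTensor T (diagEquiv (T := T) (S := S) hsurj M N' z) := by
    intro z
    induction z with
    | zero => simp
    | add a b ha hb => simp only [map_add, ha, hb]
    | tmul a n =>
      induction a with
      | zero => simp
      | add a b ha hb => simp only [TensorProduct.add_tmul, map_add, ha, hb]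
      | tmul a m => rfl
  intro a b hab
  apply (diagEquiv (T := T) (S := S) hsurj M N').injective
  apply h
  rw [← hcomm, ← hcomm, hab]

/-- The vanishing of `Tor₁(M, N)`, in the form of injectivity of `M ⊗ N' → M ⊗ G`, gives `K ∩ IX ⊆
IK`, where `X = (S ⊗ M) ⊗ G`, `I` is the ideal of the diagonal and `K` is the image of `(S ⊗ M) ⊗
N'` in `X`. -/
theorem range_inf_le [Module.Flat R₁ T] (hsurj : Function.Surjective (algebraMap R₁ R₂))
    (φ : S →ₗ[S] T) (hφ : Function.Surjective φ) (I : Ideal S) (hI : LinearMap.ker φ = I • ⊤)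
    (M N' G : Type) [AddCommGroup M] [Module R₁ M]
    [AddCommGroup N'] [Module R₁ N'] [Module R₂ N'] [IsScalarTower R₁ R₂ N']
    [AddCommGroup G] [Module R₁ G] [Module R₂ G] [IsScalarTower R₁ R₂ G]
    (f : N' →ₗ[R₂] G) (hinj : Function.Injective ((f.restrictScalars R₁).lTensor M))
    (K : Submodule S ((S ⊗[R₁] M) ⊗[R₂] G))
    (hK : K = LinearMap.range (AlgebraTensorModule.lTensor S (S ⊗[R₁] M) f)) :
    K ⊓ I • ⊤ ≤ I • K := by
  subst hK
  rintro _ ⟨⟨z, rfl⟩, hz⟩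
  let φM := tensMap (R := R₁) φ M
  have hφM : Function.Surjective φM := tensMap_surjective φ hφ M
  have hkM : LinearMap.ker φM = I • ⊤ := tensMap_ker φ hφ I hI M
  have hG := tensMap_ker (R := R₂) φM hφM I hkM G
  have hN' := tensMap_ker (R := R₂) φM hφM I hkM N'
  rw [SetLike.mem_coe, ← hG, LinearMap.mem_ker] at hz
  have hcomm : tensMap (R := R₂) φM G (AlgebraTensorModule.lTensor S (S ⊗[R₁] M) f z) =
      f.lTensor (T ⊗[R₁] M) (tensMap (R := R₂) φM N' z) := by
    generalize z = z
    induction z with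
    | zero => simp
    | add a b ha hb => simp only [map_add, ha, hb]
    | tmul a n => rfl
  rw [hcomm] at hz
  have h0 : tensMap (R := R₂) φM N' z = 0 :=
    diag_injective (S := S) hsurj M N' G f hinj (by rw [map_zero]; exact hz)
  rw [← LinearMap.mem_ker, hN'] at h0
  have := Submodule.mem_map_of_mem (f := AlgebraTensorModule.lTensor S (S ⊗[R₁] M) f) h0
  rwa [Submodule.map_smul'', Submodule.map_top] at this

end
end CodimTensor

/-! ### The depth formula for two maps into a common ring -/

namespace CodimTensor
open IsLocalRing RingTheory.Sequence Pointwise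

theorem rigid_exact {S X' X P : Type} [CommRing S] [IsLocalRing S] [IsNoetherianRing S]
    [AddCommGroup X'] [Module S X'] [AddCommGroup X] [Module S X] [Module.Finite S X]
    [AddCommGroup P] [Module S P] (F : X' →ₗ[S] X) (E : X →ₗ[S] P)
    (hE : Function.Surjective E) (hFE : Function.Exact F E) (ts : List S)
    (hts : ∀ t ∈ ts, t ∈ maximalIdeal S) (hreg : IsWeaklyRegular X ts)
    (h : LinearMap.range F ⊓ Ideal.ofList ts • ⊤ ≤ Ideal.ofList ts • LinearMap.range F) :
    IsWeaklyRegular P ts :=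
  (LinearEquiv.isWeaklyRegular_congr
    ((Submodule.quotEquivOfEq _ _ (LinearMap.exact_iff.mp hFE).symm).trans
      (LinearMap.quotKerEquivOfSurjective E hE)) ts).mp (rigid ts hts _ _ hreg h)

theorem HasDepth.of_weaklyRegular_ker {S P Q : Type} [CommRing S] [IsLocalRing S]
    [AddCommGroup P] [Module S P] [AddCommGroup Q] [Module S Q] (ts : List S)
    (hts : ∀ t ∈ ts, t ∈ maximalIdeal S) (E : P →ₗ[S] Q)
    (hE : Function.Surjective E) (hK : LinearMap.ker E = Ideal.ofList ts • ⊤) (r : ℕ)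
    (hreg : IsWeaklyRegular P ts) (h : HasDepth S r Q) : HasDepth S (ts.length + r) P :=
  HasDepth.of_weaklyRegular ts hts r P hreg
    (h.congr r ((Submodule.quotEquivOfEq _ _ hK.symm).trans
      (LinearMap.quotKerEquivOfSurjective E hE)).symm)

theorem rigid_tens {R₂ S Y N' G N : Type} [CommRing R₂] [CommRing S] [Algebra R₂ S]
    [IsLocalRing S] [IsNoetherianRing S] [AddCommGroup Y] [Module R₂ Y] [Module S Y]
    [IsScalarTower R₂ S Y] [Module.Finite S Y] [AddCommGroup N'] [Module R₂ N'] [AddCommGroup G]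
    [Module R₂ G] [AddCommGroup N] [Module R₂ N] [Module.Finite R₂ G]
    (f : N' →ₗ[R₂] G) (g : G →ₗ[R₂] N) (hg : Function.Surjective g) (hfg : Function.Exact f g)
    (ts : List S) (hts : ∀ t ∈ ts, t ∈ maximalIdeal S) (hreg : IsWeaklyRegular (Y ⊗[R₂] G) ts)
    (h : LinearMap.range (AlgebraTensorModule.lTensor S Y f) ⊓ Ideal.ofList ts • ⊤ ≤
      Ideal.ofList ts • LinearMap.range (AlgebraTensorModule.lTensor S Y f)) :
    IsWeaklyRegular (Y ⊗[R₂] N) ts := by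
  have := finite_tensor (R := R₂) S Y G
  exact rigid_exact _ (AlgebraTensorModule.lTensor S Y g)
    (LinearMap.lTensor_surjective _ hg) (lTensor_exact Y hfg hg) ts hts hreg h

/-- If `Tor₁(M, N) = 0`, in the form `hinj`, the equations `ts` of the diagonal are weakly regular
on the external tensor product of `M` and `N`. -/
theorem weaklyRegular_tens_tens {R₁ R₂ S : Type} [CommRing R₁] [CommRing R₂] [CommRing S] [Algebra R₁ S]
    [Algebra R₂ S] [SMulCommClass R₁ R₂ S] [Algebra R₁ R₂]
    [IsLocalRing R₁] [IsLocalRing S]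
    [IsNoetherianRing R₁] [IsNoetherianRing S] [IsLocalHom (algebraMap R₁ S)]
    {T : Type} [AddCommGroup T] [Module S T] [Module R₁ T] [Module R₂ T]
    [IsScalarTower R₁ S T] [IsScalarTower R₂ S T] [IsScalarTower R₁ R₂ T]
    [Module.Flat R₁ T] (hsurj : Function.Surjective (algebraMap R₁ R₂))
    {x₁ : List R₁} (hx₁ : Ideal.ofList x₁ = maximalIdeal R₁)
    (ts : List S) (hts : ∀ t ∈ ts, t ∈ maximalIdeal S)
    (ht1 : IsWeaklyRegular S (ts ++ x₁.map (algebraMap R₁ S)))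
    (φ : S →ₗ[S] T) (hφ : Function.Surjective φ) (hkφ : LinearMap.ker φ = Ideal.ofList ts • ⊤)
    (M N' G N : Type) [AddCommGroup M] [Module R₁ M]
    [AddCommGroup N'] [Module R₁ N'] [Module R₂ N'] [IsScalarTower R₁ R₂ N']
    [AddCommGroup G] [Module R₁ G] [Module R₂ G] [IsScalarTower R₁ R₂ G]
    [AddCommGroup N] [Module R₂ N]
    [Module.Finite R₁ M] [Module.Finite R₂ G] [Module.Flat R₂ G]
    (f : N' →ₗ[R₂] G) (g : G →ₗ[R₂] N) (hg : Function.Surjective g) (hfg : Function.Exact f g)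
    (hinj : Function.Injective ((f.restrictScalars R₁).lTensor M)) :
    IsWeaklyRegular ((S ⊗[R₁] M) ⊗[R₂] N) ts := by
  have hfin : Module.Finite S (S ⊗[R₁] M) := finite_tensor S S M
  have hle := range_inf_le hsurj φ hφ (Ideal.ofList ts) hkφ M N' G f hinj _ rfl
  have hregX : IsWeaklyRegular ((S ⊗[R₁] M) ⊗[R₂] G) ts :=
    weaklyRegular_tens_of_flat G ts _ (weaklyRegular_tens hx₁ M ts hts S ht1)
  exact rigid_tens f g hg hfg ts hts hregX hle

theorem HasDepth.tens_tens_quot {R₁ R₂ S : Type} [CommRing R₁] [CommRing R₂] [CommRing S]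
    [Algebra R₁ S] [Algebra R₂ S] [SMulCommClass R₁ R₂ S] [Algebra R₁ R₂] [IsLocalRing S]
    {T : Type} [AddCommGroup T] [Module S T] [Module R₁ T] [Module R₂ T]
    [IsScalarTower R₁ S T] [IsScalarTower R₂ S T] [IsScalarTower R₁ R₂ T]
    (hsurj : Function.Surjective (algebraMap R₁ R₂)) (ts : List S)
    (hts : ∀ t ∈ ts, t ∈ maximalIdeal S)
    (φ : S →ₗ[S] T) (hφ : Function.Surjective φ) (hkφ : LinearMap.ker φ = Ideal.ofList ts • ⊤)
    (M N : Type) [AddCommGroup M] [Module R₁ M]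
    [AddCommGroup N] [Module R₁ N] [Module R₂ N] [IsScalarTower R₁ R₂ N] (r : ℕ)
    (hreg : IsWeaklyRegular ((S ⊗[R₁] M) ⊗[R₂] N) ts)
    (h : HasDepth S r (T ⊗[R₁] (M ⊗[R₁] N))) :
    HasDepth S (ts.length + r) ((S ⊗[R₁] M) ⊗[R₂] N) := by
  have h2 := h.congr r (diagEquiv (S := S) (T := T) (R₂ := R₂) hsurj M N).symm
  have hk := tensMap_ker (R := R₂) (tensMap (R := R₁) φ M) (tensMap_surjective φ hφ M) _
      (tensMap_ker φ hφ _ hkφ M) N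
  exact HasDepth.of_weaklyRegular_ker ts hts (tensMap (R := R₂) (tensMap (R := R₁) φ M) N)
      (tensMap_surjective _ (tensMap_surjective φ hφ M) N) hk r hreg h2

/-- The depth formula. The rings `R₁` and `R₂` act on `S` independently; the surjection `R₁ → R₂`,
which in the application is the identity of one ring, identifies the two actions on the diagonal
`S/(ts)`. Both sides are the depth of the external tensor product of `M` and `N`. -/
theorem depth_formula {R₁ R₂ S : Type} [CommRing R₁] [CommRing R₂] [CommRing S] [Algebra R₁ S]
    [Algebra R₂ S] [SMulCommClass R₁ R₂ S] [SMulCommClass R₂ R₁ S] [Algebra R₁ R₂]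
    [IsLocalRing R₁] [IsLocalRing R₂] [IsLocalRing S]
    [IsNoetherianRing R₁] [IsNoetherianRing R₂] [IsNoetherianRing S]
    [IsLocalHom (algebraMap R₁ S)] [IsLocalHom (algebraMap R₂ S)]
    {x₁ : List R₁} (hx₁ : Ideal.ofList x₁ = maximalIdeal R₁)
    {x₂ : List R₂} (hx₂ : Ideal.ofList x₂ = maximalIdeal R₂)
    (h12 : IsRegular S (x₂.map (algebraMap R₂ S) ++ x₁.map (algebraMap R₁ S)))
    (hm : Ideal.ofList (x₂.map (algebraMap R₂ S) ++ x₁.map (algebraMap R₁ S)) = maximalIdeal S)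
    (ts : List S) (hts : ∀ t ∈ ts, t ∈ maximalIdeal S)
    (ht1 : IsWeaklyRegular S (ts ++ x₁.map (algebraMap R₁ S)))
    (hmt : Ideal.ofList (ts ++ x₁.map (algebraMap R₁ S)) = maximalIdeal S)
    [IsScalarTower R₁ R₂ (S ⧸ (Ideal.ofList ts • ⊤ : Submodule S S))]
    (hsurj : Function.Surjective (algebraMap R₁ R₂))
    (M N' G N : Type) [AddCommGroup M] [Module R₁ M]
    [AddCommGroup N'] [Module R₁ N'] [Module R₂ N'] [IsScalarTower R₁ R₂ N']
    [AddCommGroup G] [Module R₁ G] [Module R₂ G] [IsScalarTower R₁ R₂ G]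
    [AddCommGroup N] [Module R₁ N] [Module R₂ N] [IsScalarTower R₁ R₂ N]
    [Module.Finite R₁ M] [Module.Finite R₂ G] [Module.Flat R₂ G] [Module.Finite R₂ N]
    [Module.Finite R₁ N]
    (f : N' →ₗ[R₂] G) (g : G →ₗ[R₂] N) (hg : Function.Surjective g) (hfg : Function.Exact f g)
    (hinj : Function.Injective ((f.restrictScalars R₁).lTensor M))
    (d e r : ℕ) (hd : HasDepth R₁ d M) (he : HasDepth R₂ e N) (hr : HasDepth R₁ r (M ⊗[R₁] N)) :
    d + e = ts.length + r := by
  set I : Ideal S := Ideal.ofList ts with hIdef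
  have hm1 : maximalIdeal S = I ⊔ (maximalIdeal R₁).map (algebraMap R₁ S) := by
    rw [← hmt, Ideal.ofList_append, ← hx₁, Ideal.map_ofList]
  have hm2 : maximalIdeal S = (maximalIdeal R₁).map (algebraMap R₁ S) ⊔
      (maximalIdeal R₂).map (algebraMap R₂ S) := by
    rw [← hm, Ideal.ofList_append, ← hx₁, ← hx₂, Ideal.map_ofList, Ideal.map_ofList, sup_comm]
  have hI : I ≤ maximalIdeal S := by rw [hm1]; exact le_sup_left
  have hfin : Module.Finite S (S ⊗[R₁] M) := finite_tensor S S M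
  have hfinP : Module.Finite S ((S ⊗[R₁] M) ⊗[R₂] N) := finite_tensor S (S ⊗[R₁] M) N
  have hflT : Module.Flat R₁ (S ⧸ (I • ⊤ : Submodule S S)) := by
    rw [isWeaklyRegular_append_iff] at ht1
    exact flat_of_weaklyRegular S x₁ hx₁ _ ((isWeaklyRegular_map_algebraMap_iff _ _ _).mp ht1.2)
  have hregP : IsWeaklyRegular ((S ⊗[R₁] M) ⊗[R₂] N) ts :=
    weaklyRegular_tens_tens hsurj hx₁ ts hts ht1 (Submodule.mkQ (I • ⊤ : Submodule S S))
      (Submodule.mkQ_surjective _) (Submodule.ker_mkQ _) M N' G N f g hg hfg hinj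
  have hP1 := HasDepth.tens_tens_quot hsurj ts hts (Submodule.mkQ (I • ⊤ : Submodule S S))
      (Submodule.mkQ_surjective _) (Submodule.ker_mkQ _) M N r hregP
      (HasDepth.tens_quot I hI hm1 r (M ⊗[R₁] N) hr)
  have hP2 := HasDepth.tens_add hx₁ hx₂ h12.toIsWeaklyRegular hm2 M N d e hd he
  exact HasDepth.unique _ h12 hm _ _ hP2 hP1

end CodimTensor

namespace CodimTensor
open IsLocalRing RingTheory.Sequence Pointwise

/-- A type synonym for `R`. It allows `S` to carry two different `R`-algebra structures at once,
one over `R` and one over `Copy R`. -/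
def Copy (R : Type) : Type := R

section
variable (R : Type) [CommRing R]
instance : CommRing (Copy R) := inferInstanceAs (CommRing R)
instance [h : IsLocalRing R] : IsLocalRing (Copy R) := h
instance [h : IsNoetherianRing R] : IsNoetherianRing (Copy R) := h
instance : Algebra R (Copy R) := inferInstanceAs (Algebra R R)
instance (N : Type) [AddCommGroup N] [h : Module R N] : Module (Copy R) N := h
instance (N : Type) [AddCommGroup N] [Module R N] : IsScalarTower R (Copy R) N :=
  inferInstanceAs (IsScalarTower R R N)
instance (N : Type) [AddCommGroup N] [Module R N] [h : Module.Finite R N] :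
  Module.Finite (Copy R) N := h
instance (N : Type) [AddCommGroup N] [Module R N] [h : Module.Flat R N] :
  Module.Flat (Copy R) N := h
end

/-- The depth formula for two local homomorphisms `α` and `β` from `R` to `S` which agree modulo
the ideal of the diagonal. -/
theorem depth_formula' {R S : Type} [CommRing R] [CommRing S] [IsLocalRing R] [IsLocalRing S]
    [IsNoetherianRing R] [IsNoetherianRing S] (α β : R →+* S) [IsLocalHom α] [IsLocalHom β]
    {x : List R} (hx : Ideal.ofList x = maximalIdeal R)
    (h12 : IsRegular S (x.map β ++ x.map α))
    (hm : Ideal.ofList (x.map β ++ x.map α) = maximalIdeal S)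
    (ts : List S) (hts : ∀ t ∈ ts, t ∈ maximalIdeal S)
    (ht1 : IsWeaklyRegular S (ts ++ x.map α))
    (hmt : Ideal.ofList (ts ++ x.map α) = maximalIdeal S)
    (hαβ : ∀ r, α r - β r ∈ Ideal.ofList ts)
    (M N' G N : Type) [AddCommGroup M] [Module R M] [AddCommGroup N'] [Module R N']
    [AddCommGroup G] [Module R G] [AddCommGroup N] [Module R N]
    [Module.Finite R M] [Module.Finite R G] [Module.Flat R G] [Module.Finite R N]
    (f : N' →ₗ[R] G) (g : G →ₗ[R] N) (hg : Function.Surjective g) (hfg : Function.Exact f g)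
    (hinj : Function.Injective (f.lTensor M))
    (d e r : ℕ) (hd : HasDepth R d M) (he : HasDepth R e N) (hr : HasDepth R r (M ⊗[R] N)) :
    d + e = ts.length + r := by
  let : Algebra R S := α.toAlgebra
  let : Algebra (Copy R) S := RingHom.toAlgebra (R := Copy R) β
  have : SMulCommClass R (Copy R) S := ⟨fun a b s => by
    simp only [Algebra.smul_def]; ring⟩
  have : SMulCommClass (Copy R) R S := ⟨fun a b s => by
    simp only [Algebra.smul_def]; ring⟩
  have h1 : IsLocalHom (algebraMap R S) := inferInstanceAs (IsLocalHom α)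
  have h2 : IsLocalHom (algebraMap (Copy R) S) := inferInstanceAs (IsLocalHom β)
  have : IsScalarTower R (Copy R) (S ⧸ (Ideal.ofList ts • ⊤ : Submodule S S)) := ⟨by
    intro a (b : R) z
    obtain ⟨z, rfl⟩ := Submodule.Quotient.mk_surjective _ z
    change (Submodule.Quotient.mk (β (a * b) * z) : S ⧸ (Ideal.ofList ts • ⊤ : Submodule S S)) =
      Submodule.Quotient.mk (α a * (β b * z))
    rw [eq_comm, Submodule.Quotient.eq, map_mul]
    have : α a * (β b * z) - β a * β b * z = (α a - β a) * (β b * z) := by ring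
    rw [this]
    exact Submodule.smul_mem_smul (hαβ a) trivial⟩
  let f' : N' →ₗ[Copy R] G := f
  let g' : G →ₗ[Copy R] N := g
  let x₂ : List (Copy R) := x
  have hx₂ : Ideal.ofList x₂ = maximalIdeal (Copy R) := hx
  have e₂ : x₂.map (algebraMap (Copy R) S) = x.map β := rfl
  have e₁ : x.map (algebraMap R S) = x.map α := rfl
  have hff : f'.restrictScalars R = f := rfl
  rw [← e₂, ← e₁] at h12 hm
  rw [← e₁] at ht1 hmt
  exact depth_formula (R₁ := R) (R₂ := Copy R) hx hx₂ h12 hm ts hts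
    ht1 hmt (fun r => ⟨r, rfl⟩) M N' G N f' g' hg hfg (by rw [hff]; exact hinj) d e r hd he hr

end CodimTensor

/-! ### Coefficient fields -/

namespace CodimTensor
open IsLocalRing RingTheory.Sequence Pointwise

theorem cotangentComplex_mk_eq_zero_iff (F L : Type) [Field F] [Field L] [Algebra F L]
    (f : MvPolynomial L F) (hfk : f ∈ (Algebra.Generators.self F L).toExtension.ker) :
    (Algebra.Generators.self F L).toExtension.cotangentComplex
      (Algebra.Extension.Cotangent.mk ⟨f, hfk⟩) = 0 ↔
    ∀ i, MvPolynomial.aeval id (MvPolynomial.pderiv i f) = (0 : L) := by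
  have key : ∀ i, (Algebra.Generators.self F L).cotangentSpaceBasis.repr
      ((Algebra.Generators.self F L).toExtension.cotangentComplex
      (Algebra.Extension.Cotangent.mk ⟨f, hfk⟩)) i
      = MvPolynomial.aeval id (MvPolynomial.pderiv i f) := fun i =>
    (Algebra.Generators.self F L).cotangentSpaceBasis_repr_one_tmul f i
  constructor
  · intro h i
    rw [← key i, h, map_zero]; rfl
  · intro h
    apply (Algebra.Generators.self F L).cotangentSpaceBasis.repr.injective
    ext i
    rw [key i, h i, map_zero]; rfl

/-- First-order criterion for `H₁` of the cotangent complex of `L/F` to vanish: a polynomial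
relation among elements of `L` all of whose partial derivatives vanish lies in the square of the
ideal of relations. -/
theorem subsingleton_h1_iff (F L : Type) [Field F] [Field L] [Algebra F L] :
    Subsingleton (Algebra.H1Cotangent F L) ↔ ∀ f : MvPolynomial L F,
      MvPolynomial.aeval id f = (0 : L) →
      (∀ i, MvPolynomial.aeval id (MvPolynomial.pderiv i f) = (0 : L)) →
      f ∈ RingHom.ker (MvPolynomial.aeval id : MvPolynomial L F →ₐ[F] L) ^ 2 := by
  rw [Algebra.Extension.subsingleton_h1Cotangent, injective_iff_map_eq_zero]
  constructor
  · intro h f hf hd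
    have hfk : f ∈ (Algebra.Generators.self F L).toExtension.ker := hf
    have := h _ ((cotangentComplex_mk_eq_zero_iff F L f hfk).2 hd)
    rw [Algebra.Extension.Cotangent.mk_eq_zero_iff] at this
    exact this
  · intro h x hx
    obtain ⟨⟨f, hfk⟩, rfl⟩ := Algebra.Extension.Cotangent.mk_surjective x
    rw [Algebra.Extension.Cotangent.mk_eq_zero_iff]
    exact h f hfk ((cotangentComplex_mk_eq_zero_iff F L f hfk).1 hx)

/-- Every field extension of a perfect field is formally smooth, whether or not it is finitely
generated: the first-order criterion involves finitely many elements at a time, so it reduces to a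
finitely generated subextension. -/
theorem formallySmooth_of_perfectField (F L : Type) [Field F] [Field L] [Algebra F L]
    [PerfectField F] : Algebra.FormallySmooth F L := by
  refine ⟨inferInstance, (subsingleton_h1_iff F L).2 ?_⟩
  intro f hf hd
  classical
  obtain ⟨s, q, hq⟩ := MvPolynomial.exists_finset_rename f
  let K := IntermediateField.adjoin F (s : Set L)
  let j : s → K := fun i => ⟨i, IntermediateField.subset_adjoin _ _ i.2⟩
  have hfg : K.FG := ⟨s, rfl⟩
  have : Algebra.EssFiniteType F K := IntermediateField.essFiniteType_iff.2 hfg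
  have : Algebra.FormallySmooth F K := inferInstance
  have hcomp : ∀ g : MvPolynomial K F, MvPolynomial.aeval id (MvPolynomial.rename ((↑) : K → L) g)
      = ((MvPolynomial.aeval id g : K) : L) := by
    intro g
    induction g using MvPolynomial.induction_on with
    | C a => simp
    | add p q hp hq => simp [hp, hq]
    | mul_X p a h => simp [h]
  have hg : f = MvPolynomial.rename ((↑) : K → L) (MvPolynomial.rename j q) := by
    rw [MvPolynomial.rename_rename, hq]; rfl
  rw [hg] at hf hd ⊢
  have key := (subsingleton_h1_iff F K).1 inferInstance (MvPolynomial.rename j q) ?_ ?_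
  · have := Ideal.mem_map_of_mem (MvPolynomial.rename ((↑) : K → L)).toRingHom key
    rw [Ideal.map_pow] at this
    refine Ideal.pow_right_mono ?_ 2 this
    rw [Ideal.map_le_iff_le_comap]
    intro g hg
    rw [RingHom.mem_ker] at hg
    rw [Ideal.mem_comap, RingHom.mem_ker]
    exact (hcomp g).trans (by rw [show MvPolynomial.aeval id g = (0 : K) from hg]; rfl)
  · exact Subtype.ext ((hcomp _).symm.trans hf)
  · intro i
    have := hd i
    rw [MvPolynomial.pderiv_rename Subtype.val_injective] at this
    exact Subtype.ext ((hcomp _).symm.trans this)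

end CodimTensor

namespace CodimTensor
open IsLocalRing RingTheory.Sequence Pointwise

theorem exists_perfect_subfield (K : Type) [Field K] :
    ∃ (F : Type) (_ : Field F) (_ : PerfectField F), Nonempty (F →+* K) := by
  obtain ⟨p, hp⟩ := CharP.exists K
  rcases CharP.char_is_prime_or_zero K p with h | h
  · have : Fact p.Prime := ⟨h⟩
    exact ⟨ZMod p, inferInstance, inferInstance, ⟨ZMod.castHom dvd_rfl K⟩⟩
  · subst h
    have : CharZero K := CharP.charP_to_charZero K
    exact ⟨ℚ, inferInstance, inferInstance, ⟨algebraMap ℚ K⟩⟩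

/-- A complete local ring containing a field has a coefficient field: its residue field is
formally smooth over a prime field, so the identity of the residue field lifts. -/
theorem exists_coefficientField (C K : Type) [CommRing C] [IsLocalRing C]
    [IsAdicComplete (maximalIdeal C) C] [Field K] (i : K →+* C) :
    ∃ φ : ResidueField C →+* C, (residue C).comp φ = RingHom.id _ := by
  obtain ⟨F, _, _, ⟨j⟩⟩ := exists_perfect_subfield K
  let _ : Algebra F C := (i.comp j).toAlgebra
  have := formallySmooth_of_perfectField F (ResidueField C)
  obtain ⟨g, hg⟩ := Algebra.FormallySmooth.exists_mkₐ_comp_eq_of_isAdicComplete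
    (R := F) (I := maximalIdeal C) (AlgHom.id F (ResidueField C) : ResidueField C →ₐ[F] C ⧸ maximalIdeal C)
  exact ⟨g, congrArg AlgHom.toRingHom hg⟩

end CodimTensor

/-! ### Power series rings -/

namespace CodimTensor
open IsLocalRing RingTheory.Sequence Pointwise

section PowerSeries
variable {ι k : Type} [Field k]

theorem coeff_X_mul_eq_zero {f : MvPowerSeries ι k} {i : ι} {m : ι →₀ ℕ} (hm : m i = 0) :
    MvPowerSeries.coeff m (MvPowerSeries.X i * f) = 0 :=
  MvPowerSeries.X_dvd_iff.1 (Dvd.intro f rfl) m hm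

/-- A power series lies in the ideal of a finite set of variables iff each of its monomials
involves one of them. -/
theorem mem_span_X_iff (s : Finset ι) (f : MvPowerSeries ι k) :
    f ∈ Ideal.span ((MvPowerSeries.X : ι → MvPowerSeries ι k) '' s) ↔
      ∀ m : ι →₀ ℕ, (∀ i ∈ s, m i = 0) → MvPowerSeries.coeff m f = 0 := by
  classical
  constructor
  · intro h
    induction h using Submodule.span_induction with
    | mem x hx =>
      intro m hm
      obtain ⟨i, hi, rfl⟩ := hx
      have := coeff_X_mul_eq_zero (k := k) (f := 1) (hm i hi)
      rwa [mul_one] at this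
    | zero => simp
    | add x y _ _ hx hy => exact fun m hm => by rw [map_add, hx m hm, hy m hm, add_zero]
    | smul a x _ hx =>
      intro m hm
      rw [smul_eq_mul, MvPowerSeries.coeff_mul]
      refine Finset.sum_eq_zero fun p hp => ?_
      rw [hx p.2 fun i hi => ?_, mul_zero]
      have := DFunLike.congr_fun (Finset.HasAntidiagonal.mem_antidiagonal.1 hp) i
      rw [Finsupp.add_apply, hm i hi] at this
      lia
  · induction s using Finset.induction_on generalizing f with
    | empty =>
      intro h
      have : f = 0 := by ext m; simpa using h m (by simp)
      rw [this]; exact zero_mem _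
    | insert i s hi ih =>
      intro h
      let g : MvPowerSeries ι k := fun m => if m i = 0 then MvPowerSeries.coeff m f else 0
      have hg : ∀ m, MvPowerSeries.coeff m g = if m i = 0 then MvPowerSeries.coeff m f else 0 :=
        fun m => rfl
      have h1 : g ∈ Ideal.span ((MvPowerSeries.X : ι → MvPowerSeries ι k) '' s) := by
        refine ih g fun m hm => ?_
        rw [hg]
        split_ifs with h0
        · exact h m (by simpa [h0] using hm)
        · rfl
      have h2 : MvPowerSeries.X i ∣ f - g := by
        rw [MvPowerSeries.X_dvd_iff]
        intro m hm
        rw [map_sub, hg, if_pos hm, sub_self]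
      have h3 : f = g + (f - g) := by ring
      rw [h3]
      refine add_mem (Ideal.span_mono (Set.image_mono (by simp)) h1) ?_
      obtain ⟨c, hc⟩ := h2
      rw [hc]
      exact Ideal.mul_mem_right _ _ (Ideal.subset_span ⟨i, by simp, rfl⟩)

theorem maximalIdeal_powerSeries [Fintype ι] :
    maximalIdeal (MvPowerSeries ι k) = Ideal.span (Set.range MvPowerSeries.X) := by
  ext f
  have := mem_span_X_iff (k := k) (Finset.univ : Finset ι) f
  rw [Finset.coe_univ, Set.image_univ] at this
  rw [this, IsLocalRing.mem_maximalIdeal, mem_nonunits_iff, MvPowerSeries.isUnit_iff_constantCoeff,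
    isUnit_iff_ne_zero, not_not, ← MvPowerSeries.coeff_zero_eq_constantCoeff_apply]
  constructor
  · intro h m hm
    have : m = 0 := by ext i; simpa using hm i (Finset.mem_univ i)
    rw [this, h]
  · intro h; exact h 0 (by simp)

theorem isWeaklyRegular_X [Fintype ι] (l : List ι) (hl : l.Nodup) :
    IsWeaklyRegular (MvPowerSeries ι k) (l.map (MvPowerSeries.X : ι → MvPowerSeries ι k)) := by
  classical
  induction l using List.reverseRecOn with
  | nil => exact IsWeaklyRegular.nil _ _
  | append_singleton l i ih =>
    rw [List.map_append, isWeaklyRegular_append_iff]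
    have hl' := List.nodup_append.1 hl
    refine ⟨ih hl'.1, ?_⟩
    have hil : i ∉ l := fun h => hl'.2.2 i h i (by simp) rfl
    rw [List.map_singleton, isWeaklyRegular_singleton_iff]
    have hI : Ideal.ofList (l.map (MvPowerSeries.X : ι → MvPowerSeries ι k)) =
        Ideal.span ((MvPowerSeries.X : ι → MvPowerSeries ι k) '' l.toFinset) := by
      unfold Ideal.ofList
      congr 1
      ext; simp
    rw [hI]
    rw [isSMulRegular_quotient_iff_mem_of_smul_mem]
    intro f hf
    rw [smul_eq_mul, Ideal.mul_top] at hf ⊢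
    rw [smul_eq_mul, mem_span_X_iff] at hf
    rw [mem_span_X_iff]
    intro m hm
    have := hf (Finsupp.single i 1 + m) (by
      intro j hj
      have hij : i ≠ j := by rintro rfl; simp at hj; exact hil hj
      simp [hm j hj, hij])
    rwa [MvPowerSeries.X, MvPowerSeries.coeff_add_monomial_mul, one_mul] at this

end PowerSeries
end CodimTensor

namespace CodimTensor
open IsLocalRing RingTheory.Sequence Pointwise

section PowerSeries
variable {ι k : Type} [Field k] [Fintype ι]

/-- Power series are approximated by polynomials modulo powers of the maximal ideal. -/
theorem exists_polynomial_sub_mem (n : ℕ) (f : MvPowerSeries ι k) :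
    ∃ p : MvPolynomial ι k, f - (p : MvPowerSeries ι k) ∈ maximalIdeal (MvPowerSeries ι k) ^ n := by
  set coe := (MvPolynomial.coeToMvPowerSeries.ringHom : MvPolynomial ι k →+* MvPowerSeries ι k)
  have hmap : maximalIdeal (MvPowerSeries ι k) = Ideal.map coe (MvPolynomial.idealOfVars ι k) := by
    rw [maximalIdeal_powerSeries, MvPolynomial.idealOfVars, Ideal.map_span, ← Set.range_comp]
    congr 2
    ext1 i; exact (MvPolynomial.coe_X i).symm
  induction n generalizing f with
  | zero => exact ⟨0, by simp⟩
  | succ n ih =>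
    obtain ⟨p, hp⟩ := ih f
    have step : ∀ g ∈ maximalIdeal (MvPowerSeries ι k) ^ n,
        ∃ q : MvPolynomial ι k, g - coe q ∈ maximalIdeal (MvPowerSeries ι k) ^ (n + 1) := by
      intro g hg
      rw [hmap, ← Ideal.map_pow, Ideal.map] at hg
      induction hg using Submodule.span_induction with
      | mem x hx => obtain ⟨q, hq, rfl⟩ := hx; exact ⟨q, by simp⟩
      | zero => exact ⟨0, by simp⟩
      | add x y _ _ hx hy =>
        obtain ⟨q, hq⟩ := hx
        obtain ⟨r, hr⟩ := hy
        exact ⟨q + r, by rw [map_add, add_sub_add_comm]; exact add_mem hq hr⟩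
      | smul a x hxm hx =>
        obtain ⟨q, hq⟩ := hx
        refine ⟨MvPolynomial.C (MvPowerSeries.constantCoeff a) * q, ?_⟩
        have hx : x ∈ maximalIdeal (MvPowerSeries ι k) ^ n := by
          rw [hmap, ← Ideal.map_pow]; exact hxm
        have ha : a - MvPowerSeries.C (MvPowerSeries.constantCoeff a) ∈
            maximalIdeal (MvPowerSeries ι k) := by
          rw [IsLocalRing.mem_maximalIdeal, mem_nonunits_iff,
            MvPowerSeries.isUnit_iff_constantCoeff]
          simp
        have hC : coe (MvPolynomial.C (MvPowerSeries.constantCoeff a)) =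
          MvPowerSeries.C (MvPowerSeries.constantCoeff a) := MvPolynomial.coe_C _
        rw [map_mul, hC, smul_eq_mul]
        have : a * x - MvPowerSeries.C (MvPowerSeries.constantCoeff a) * coe q =
          (a - MvPowerSeries.C (MvPowerSeries.constantCoeff a)) * x +
            MvPowerSeries.C (MvPowerSeries.constantCoeff a) * (x - coe q) := by ring
        rw [this]
        refine add_mem ?_ (Ideal.mul_mem_left _ _ hq)
        rw [pow_succ']
        exact Ideal.mul_mem_mul ha hx
    obtain ⟨q, hq⟩ := step _ hp
    refine ⟨p + q, ?_⟩
    have : f - ((p + q : MvPolynomial ι k) : MvPowerSeries ι k) = f - (p : MvPowerSeries ι k) - coe q := by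
      rw [MvPolynomial.coe_add, sub_sub]; rfl
    rw [this]; exact hq

/-- Two homomorphisms from a power series ring to a Noetherian local ring `S`, sending the
variables into the maximal ideal, agreeing on constants, and agreeing modulo `I` on the variables,
agree modulo `I`. Polynomial approximation gives this modulo each `I + 𝔪ⁿ`, and Krull's
intersection theorem concludes. -/
theorem powerSeries_hom_sub_mem {S : Type} [CommRing S] [IsLocalRing S] [IsNoetherianRing S]
    (u v : MvPowerSeries ι k →+* S) (I : Ideal S)
    (hu : ∀ i, u (MvPowerSeries.X i) ∈ maximalIdeal S)
    (hv : ∀ i, v (MvPowerSeries.X i) ∈ maximalIdeal S)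
    (hC : ∀ c, u (MvPowerSeries.C c) = v (MvPowerSeries.C c))
    (hX : ∀ i, u (MvPowerSeries.X i) - v (MvPowerSeries.X i) ∈ I) (f : MvPowerSeries ι k) :
    u f - v f ∈ I := by
  by_cases hI : I = ⊤
  · rw [hI]; trivial
  have hpoly : ∀ p : MvPolynomial ι k, u p - v p ∈ I := by
    intro p
    induction p using MvPolynomial.induction_on with
    | C a => rw [MvPolynomial.coe_C, hC, sub_self]; exact zero_mem _
    | add p q hp hq =>
      rw [MvPolynomial.coe_add, map_add, map_add, add_sub_add_comm]; exact add_mem hp hq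
    | mul_X p i hp =>
      rw [MvPolynomial.coe_mul, MvPolynomial.coe_X, map_mul, map_mul]
      have : u p * u (MvPowerSeries.X i) - v p * v (MvPowerSeries.X i) =
        (u p - v p) * u (MvPowerSeries.X i) + v p * (u (MvPowerSeries.X i) - v (MvPowerSeries.X i)) := by
        ring
      rw [this]
      exact add_mem (Ideal.mul_mem_right _ _ hp) (Ideal.mul_mem_left _ _ (hX i))
  have hpow : ∀ (w : MvPowerSeries ι k →+* S), (∀ i, w (MvPowerSeries.X i) ∈ maximalIdeal S) →
      ∀ n, ∀ g ∈ maximalIdeal (MvPowerSeries ι k) ^ n, w g ∈ maximalIdeal S ^ n := by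
    intro w hw n g hg
    have h1 : Ideal.map w (maximalIdeal (MvPowerSeries ι k)) ≤ maximalIdeal S := by
      rw [maximalIdeal_powerSeries, Ideal.map_span, Ideal.span_le]
      rintro _ ⟨_, ⟨i, rfl⟩, rfl⟩
      exact hw i
    have h2 := Ideal.mem_map_of_mem w hg
    rw [Ideal.map_pow] at h2
    exact Ideal.pow_right_mono h1 n h2
  rw [← Ideal.Quotient.eq_zero_iff_mem]
  refine (inferInstance : IsHausdorff (maximalIdeal S) (S ⧸ I)).haus _ fun n => ?_
  rw [SModEq.zero]
  obtain ⟨p, hp⟩ := exists_polynomial_sub_mem n f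
  have e : u f - v f = (u p - v p) + (u (f - p) - v (f - p)) := by
    rw [map_sub, map_sub]; ring
  rw [e, map_add, Ideal.Quotient.eq_zero_iff_mem.2 (hpoly p), zero_add]
  have h3 : u (f - p) - v (f - p) ∈ maximalIdeal S ^ n := sub_mem (hpow u hu n _ hp) (hpow v hv n _ hp)
  have h4 := Submodule.smul_mem_smul (N := (⊤ : Submodule S (S ⧸ I))) h3
    (Submodule.mem_top : (1 : S ⧸ I) ∈ ⊤)
  rwa [Algebra.smul_def, mul_one] at h4

end PowerSeries
end CodimTensor

/-! ### Cohen's structure theorem -/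

namespace CodimTensor
open IsLocalRing RingTheory.Sequence Pointwise

/-- A map of coefficients and elements of `J` extend from polynomials to power series when the
target is `J`-adically complete. -/
theorem exists_powerSeries_lift {ι k C : Type} [Finite ι] [CommRing k] [CommRing C] (J : Ideal C)
    [IsAdicComplete J C] (φ : k →+* C) (c : ι → C) (hc : ∀ i, c i ∈ J) :
    ∃ u : MvPowerSeries ι k →+* C, ∀ p : MvPolynomial ι k, u p = MvPolynomial.eval₂Hom φ c p := by
  have hI : ∀ n, ∀ p ∈ MvPolynomial.idealOfVars ι k ^ n,
      ((Ideal.Quotient.mk (J ^ n)).comp (MvPolynomial.eval₂Hom φ c)) p = 0 := by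
    intro n p hp
    have h1 : Ideal.map (MvPolynomial.eval₂Hom φ c) (MvPolynomial.idealOfVars ι k) ≤ J := by
      rw [MvPolynomial.idealOfVars, Ideal.map_span, Ideal.span_le]
      rintro _ ⟨_, ⟨i, rfl⟩, rfl⟩
      simpa using hc i
    have h2 := Ideal.mem_map_of_mem (MvPolynomial.eval₂Hom φ c) hp
    rw [Ideal.map_pow] at h2
    exact Ideal.Quotient.eq_zero_iff_mem.2 (Ideal.pow_right_mono h1 n h2)
  let g : ∀ n, MvPowerSeries ι k →+* C ⧸ J ^ n := fun n =>
    (Ideal.Quotient.lift _ _ (hI n)).comp (MvPowerSeries.truncTotalAlgHom ι k n).toRingHom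
  have hg : ∀ n (f : MvPowerSeries ι k), g n f =
      Ideal.Quotient.mk (J ^ n) (MvPolynomial.eval₂Hom φ c (MvPowerSeries.truncTotal n f)) :=
    fun n f => rfl
  have hcompat : ∀ {m n : ℕ} (hle : m ≤ n), (Ideal.Quotient.factorPow J hle).comp (g n) = g m := by
    intro m n hle
    ext f
    rw [RingHom.comp_apply, hg, hg]
    have := hI m _ (MvPowerSeries.truncTotal_sub_truncTotal_mem_pow_idealOfVars hle le_rfl f)
    rw [map_sub, sub_eq_zero] at this
    exact this
  refine ⟨IsAdicComplete.liftRingHom J g hcompat, fun p => ?_⟩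
  rw [← sub_eq_zero]
  refine (inferInstance : IsHausdorff J C).haus _ fun n => ?_
  rw [SModEq.zero, smul_eq_mul, Ideal.mul_top, ← Ideal.Quotient.eq_zero_iff_mem, map_sub,
    IsAdicComplete.mk_liftRingHom, sub_eq_zero]
  have h := (MvPowerSeries.truncTotalAlgHom ι k n).commutes p
  change (Ideal.Quotient.lift _ _ (hI n)) ((MvPowerSeries.truncTotalAlgHom ι k n)
    (algebraMap (MvPolynomial ι k) (MvPowerSeries ι k) p)) = _
  rw [h]
  rfl

theorem krullDim_le_of_flat_local {R C : Type} [CommRing R] [CommRing C] [IsLocalRing R]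
    [IsLocalRing C] [Algebra R C] [Module.Flat R C] [IsLocalHom (algebraMap R C)] :
    ringKrullDim R ≤ ringKrullDim C := by
  have : Module.FaithfullyFlat R C := Module.FaithfullyFlat.of_flat_of_isLocalHom
  unfold ringKrullDim Order.krullDim
  refine iSup_le fun l => ?_
  obtain ⟨P, hP⟩ := PrimeSpectrum.comap_surjective_of_faithfullyFlat (A := R) (B := C) l.last
  have : P.asIdeal.LiesOver l.last.asIdeal := ⟨by rw [← hP]; rfl⟩
  obtain ⟨L, hL, -⟩ := Ideal.exists_ltSeries_of_hasGoingDown l P.asIdeal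
  rw [← hL]
  exact le_iSup (fun L : LTSeries (PrimeSpectrum C) => (L.length : WithBot ℕ∞)) L

/-- Cohen's structure theorem, for a complete local ring `C` flat over `R` with `𝔪_R C = 𝔪_C`: a
coefficient field and the parameters `xⱼ` define a surjection `u : k⟦X₁, …, Xₙ⟧ → C`. It is
injective, because the kernel of a surjection between rings of the same dimension contains no
nonzerodivisor. The flat map is the composite of `R → C` with the inverse of `u`. -/
theorem exists_hom_powerSeries_of_complete {R C K : Type} [CommRing R] [IsLocalRing R]
    [IsNoetherianRing R] [CommRing C] [IsLocalRing C] [IsAdicComplete (maximalIdeal C) C]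
    [Algebra R C] [Module.Flat R C] [IsLocalHom (algebraMap R C)]
    (hmC : maximalIdeal C = (maximalIdeal R).map (algebraMap R C))
    [Field K] (i : K →+* R) {n : ℕ} (x : Fin n → R)
    (hx : Ideal.span (Set.range x) = maximalIdeal R) (hdim : ringKrullDim R = n) :
    ∃ (k : Type) (_ : Field k) (ψ : R →+* MvPowerSeries (Fin n) k),
      ψ.Flat ∧ ∀ i, ψ (x i) = MvPowerSeries.X i := by
  obtain ⟨φ, hφ⟩ := exists_coefficientField C K ((algebraMap R C).comp i)
  let k := ResidueField C
  obtain ⟨u, hu⟩ := exists_powerSeries_lift (maximalIdeal C) φ (fun j => algebraMap R C (x j))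
    (fun j => by
      rw [hmC, ← hx]; exact Ideal.mem_map_of_mem _ (Ideal.subset_span ⟨j, rfl⟩))
  have huX : ∀ j, u (MvPowerSeries.X j) = algebraMap R C (x j) := fun j => by
    have := hu (MvPolynomial.X j)
    simpa using this
  have huC : ∀ a, u (MvPowerSeries.C a) = φ a := fun a => by
    have := hu (MvPolynomial.C a)
    simpa using this
  have hmap : (maximalIdeal (MvPowerSeries (Fin n) k)).map u = maximalIdeal C := by
    rw [maximalIdeal_powerSeries, Ideal.map_span, hmC, ← hx, Ideal.map_span, ← Set.range_comp,
      ← Set.range_comp]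
    congr 2
    ext1 j; exact huX j
  have hsurj : Function.Surjective u := by
    have h1 : IsAdicComplete (maximalIdeal (MvPowerSeries (Fin n) k)) (MvPowerSeries (Fin n) k) := by
      rw [maximalIdeal_powerSeries]; infer_instance
    have h2 : IsHausdorff ((maximalIdeal (MvPowerSeries (Fin n) k)).map u) C := by
      rw [hmap]; infer_instance
    refine surjective_of_mk_map_comp_surjective (I := maximalIdeal (MvPowerSeries (Fin n) k)) u ?_
    intro y
    obtain ⟨y, rfl⟩ := Ideal.Quotient.mk_surjective y
    refine ⟨MvPowerSeries.C (residue C y), ?_⟩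
    rw [RingHom.comp_apply, huC, Ideal.Quotient.eq, hmap]
    have := RingHom.congr_fun hφ (residue C y)
    exact Ideal.Quotient.eq.1 this
  -- A nonzero kernel would make the dimension drop, but `dim C ≥ dim R = n`.
  have hinj : Function.Injective u := by
    rw [injective_iff_map_eq_zero]
    intro f hf
    by_contra hf0
    have h1 := ringKrullDim_succ_le_of_surjective u hsurj (mem_nonZeroDivisors_of_ne_zero hf0) hf
    have h2 : ringKrullDim (MvPowerSeries (Fin n) k) ≤ n := by
      refine (ringKrullDim_le_spanFinrank_maximalIdeal _).trans ?_
      rw [maximalIdeal_powerSeries]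
      have := Submodule.spanFinrank_span_le_ncard_of_finite (R := MvPowerSeries (Fin n) k)
        (Set.finite_range (MvPowerSeries.X : Fin n → MvPowerSeries (Fin n) k))
      have h5 : (Set.range (MvPowerSeries.X : Fin n → MvPowerSeries (Fin n) k)).ncard ≤ n := by
        rw [← Set.image_univ]
        exact (Set.ncard_image_le Set.finite_univ).trans (by simp)
      exact_mod_cast this.trans h5
    have h3 : (n : WithBot ℕ∞) ≤ ringKrullDim C := by
      rw [← hdim]; exact krullDim_le_of_flat_local
    have h4 : (n : WithBot ℕ∞) + 1 ≤ n := (by gcongr : (n : WithBot ℕ∞) + 1 ≤ ringKrullDim C + 1).trans (h1.trans h2)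
    have : n + 1 ≤ n := by exact_mod_cast h4
    lia
  let e := RingEquiv.ofBijective u ⟨hinj, hsurj⟩
  refine ⟨k, inferInstance, e.symm.toRingHom.comp (algebraMap R C), ?_, fun j => ?_⟩
  · exact RingHom.Flat.comp (RingHom.flat_algebraMap_iff.2 inferInstance)
      (RingHom.Flat.of_bijective e.symm.bijective)
  change e.symm (algebraMap R C (x j)) = _
  rw [RingEquiv.symm_apply_eq]
  exact (huX j).symm

theorem exists_hom_powerSeries {R K : Type} [CommRing R] [IsLocalRing R] [IsNoetherianRing R]
    [Field K] (i : K →+* R) {n : ℕ} (x : Fin n → R)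
    (hx : Ideal.span (Set.range x) = maximalIdeal R) (hdim : ringKrullDim R = n) :
    ∃ (k : Type) (_ : Field k) (ψ : R →+* MvPowerSeries (Fin n) k),
      ψ.Flat ∧ ∀ i, ψ (x i) = MvPowerSeries.X i := by
  have := AdicCompletion.flat_of_isNoetherian (maximalIdeal R)
  exact exists_hom_powerSeries_of_complete (C := AdicCompletion (maximalIdeal R) R)
    AdicCompletion.maximalIdeal_eq_map i x hx hdim

/-- Weak regularity of a sequence descends along a faithfully flat base change. -/
theorem isWeaklyRegular_of_faithfullyFlat {R S M N : Type} [CommRing R] [CommRing S] [Algebra R S]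
    [Module.FaithfullyFlat R S] [AddCommGroup M] [Module R M] [AddCommGroup N] [Module R N]
    [Module S N] [IsScalarTower R S N] {f : M →ₗ[R] N} (hf : IsBaseChange S f) {rs : List R}
    (h : IsWeaklyRegular N (rs.map (algebraMap R S))) : IsWeaklyRegular M rs := by
  induction rs generalizing M N with
  | nil => simp
  | cons x _ ih =>
    simp only [List.map_cons, isWeaklyRegular_cons_iff] at h ⊢
    have e := (QuotSMulTop.algebraMapTensorEquivTensorQuotSMulTop x M S).symm ≪≫ₗ
      QuotSMulTop.congr ((algebraMap R S) x) hf.equiv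
    have hg : IsBaseChange S <|
        e.toLinearMap.restrictScalars R ∘ₗ TensorProduct.mk R S (QuotSMulTop x M) 1 :=
      IsBaseChange.of_equiv e (fun _ ↦ by simp)
    refine ⟨?_, ih hg h.2⟩
    have hinj : Function.Injective f := by
      have : ⇑f = hf.equiv ∘ TensorProduct.mk R S M 1 := by
        ext m; simp
      rw [this]
      exact hf.equiv.injective.comp (Module.FaithfullyFlat.tensorProduct_mk_injective M)
    intro a b hab
    apply hinj
    apply h.1
    simp only [algebraMap_smul, ← map_smul]
    exact congrArg f hab

end CodimTensor

/-! ### The depth formula over a regular local ring -/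

namespace CodimTensor
open IsLocalRing RingTheory.Sequence Pointwise

/-- If `a, b` is a weakly regular sequence, so is `b - a, a`. -/
theorem isWeaklyRegular_sub_append {S : Type} [CommRing S] [IsLocalRing S] [IsNoetherianRing S]
    {ι : Type} (l : List ι) (a b : ι → S) (ha : ∀ i, a i ∈ maximalIdeal S)
    (hb : ∀ i, b i ∈ maximalIdeal S) (h : IsWeaklyRegular S (l.map a ++ l.map b)) :
    IsWeaklyRegular S (l.map (fun i => b i - a i) ++ l.map a) := by
  refine IsLocalRing.isWeaklyRegular_of_perm_of_subset_maximalIdeal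
    (rs := l.map a ++ l.map (fun i => b i - a i)) ?_ List.perm_append_comm ?_
  · rw [isWeaklyRegular_append_iff'] at h ⊢
    refine ⟨h.1, ?_⟩
    convert h.2 using 1
    rw [List.map_map, List.map_map]
    refine List.map_congr_left fun i hi => ?_
    refine Ideal.Quotient.eq.2 ?_
    rw [sub_sub_cancel_left, neg_mem_iff]
    exact Ideal.subset_span (List.mem_map_of_mem hi)
  · intro r hr
    simp only [List.mem_append, List.mem_map] at hr
    obtain ⟨i, -, rfl⟩ | ⟨i, -, rfl⟩ := hr
    · exact ha i
    · exact sub_mem (hb i) (ha i)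

theorem ofList_map_finRange {S : Type} [CommRing S] {n : ℕ} (x : Fin n → S) :
    Ideal.ofList ((List.finRange n).map x) = Ideal.span (Set.range x) := by
  unfold Ideal.ofList
  congr 1
  ext; simp

/-- A regular system of parameters is a regular sequence: its image in a power series ring
consists of the variables, and regularity descends along that faithfully flat map. -/
theorem isRegular_parameters {R K : Type} [CommRing R] [IsLocalRing R] [IsNoetherianRing R]
    [Field K] (i : K →+* R) {n : ℕ} (x : Fin n → R)
    (hx : Ideal.span (Set.range x) = maximalIdeal R) (hdim : ringKrullDim R = n) :
    IsRegular R ((List.finRange n).map x) := by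
  obtain ⟨k, _, ψ, hflat, hψ⟩ := exists_hom_powerSeries i x hx hdim
  algebraize [ψ]
  have hloc : IsLocalHom (algebraMap R (MvPowerSeries (Fin n) k)) := by
    rw [((local_hom_TFAE (algebraMap R (MvPowerSeries (Fin n) k))).out 0 2 :)]
    rw [← hx, Ideal.map_span, Ideal.span_le, maximalIdeal_powerSeries]
    rintro _ ⟨_, ⟨j, rfl⟩, rfl⟩
    exact Ideal.subset_span ⟨j, (hψ j).symm⟩
  have : Module.FaithfullyFlat R (MvPowerSeries (Fin n) k) :=
    Module.FaithfullyFlat.of_flat_of_isLocalHom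
  rw [IsLocalRing.isRegular_iff_isWeaklyRegular_of_subset_maximalIdeal]
  · refine isWeaklyRegular_of_faithfullyFlat
      (IsBaseChange.linearMap R (MvPowerSeries (Fin n) k)) ?_
    have := isWeaklyRegular_X (k := k) (List.finRange n) (List.nodup_finRange n)
    convert this using 1
    rw [List.map_map]
    exact List.map_congr_left fun j _ => hψ j
  · intro r hr
    obtain ⟨j, -, rfl⟩ := List.mem_map.1 hr
    rw [← hx]; exact Ideal.subset_span ⟨j, rfl⟩

/-- The depth formula over a regular local ring containing a field, for modules with `Tor₁(M, N) =
0`. The latter is expressed by a presentation `N' → G → N` with `G` flat and `M ⊗ N' → M ⊗ G`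
injective. -/
theorem depth_formula_regularLocal {R K : Type} [CommRing R] [IsLocalRing R] [IsNoetherianRing R]
    [Field K] (i : K →+* R) {n : ℕ} (x : Fin n → R)
    (hx : Ideal.span (Set.range x) = maximalIdeal R) (hdim : ringKrullDim R = n)
    (M N' G N : Type) [AddCommGroup M] [Module R M] [AddCommGroup N'] [Module R N']
    [AddCommGroup G] [Module R G] [AddCommGroup N] [Module R N]
    [Module.Finite R M] [Module.Finite R G] [Module.Flat R G] [Module.Finite R N]
    (f : N' →ₗ[R] G) (g : G →ₗ[R] N) (hg : Function.Surjective g) (hfg : Function.Exact f g)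
    (hinj : Function.Injective (f.lTensor M))
    (d e r : ℕ) (hd : HasDepth R d M) (he : HasDepth R e N) (hr : HasDepth R r (M ⊗[R] N)) :
    d + e = n + r := by
  obtain ⟨k, _, ψ, -, hψ⟩ := exists_hom_powerSeries i x hx hdim
  let S := MvPowerSeries (Fin n ⊕ Fin n) k
  let jl : MvPowerSeries (Fin n) k →+* S := (MvPowerSeries.rename Sum.inl).toRingHom
  let jr : MvPowerSeries (Fin n) k →+* S := (MvPowerSeries.rename Sum.inr).toRingHom
  have hjl : ∀ j, jl (MvPowerSeries.X j) = MvPowerSeries.X (Sum.inl j) :=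
    fun j => MvPowerSeries.rename_X _ _
  have hjr : ∀ j, jr (MvPowerSeries.X j) = MvPowerSeries.X (Sum.inr j) :=
    fun j => MvPowerSeries.rename_X _ _
  have hmax : ∀ j, (MvPowerSeries.X j : S) ∈ maximalIdeal S := fun j => by
    rw [maximalIdeal_powerSeries]; exact Ideal.subset_span ⟨j, rfl⟩
  let a : Fin n → S := fun j => MvPowerSeries.X (Sum.inl j)
  let b : Fin n → S := fun j => MvPowerSeries.X (Sum.inr j)
  have hα : ∀ j, (jl.comp ψ) (x j) = a j := fun j => by rw [RingHom.comp_apply, hψ, hjl]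
  have hβ : ∀ j, (jr.comp ψ) (x j) = b j := fun j => by rw [RingHom.comp_apply, hψ, hjr]
  have hloc : ∀ (γ : R →+* S), (∀ j, γ (x j) ∈ maximalIdeal S) → IsLocalHom γ := by
    intro γ hγ
    rw [((local_hom_TFAE γ).out 0 2 :)]
    rw [← hx, Ideal.map_span, Ideal.span_le]
    rintro _ ⟨_, ⟨j, rfl⟩, rfl⟩
    exact hγ j
  have := hloc (jl.comp ψ) fun j => by rw [hα]; exact hmax _
  have := hloc (jr.comp ψ) fun j => by rw [hβ]; exact hmax _
  have hαl : ((List.finRange n).map x).map (jl.comp ψ) = (List.finRange n).map a := by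
    rw [List.map_map]; exact List.map_congr_left fun j _ => hα j
  have hβl : ((List.finRange n).map x).map (jr.comp ψ) = (List.finRange n).map b := by
    rw [List.map_map]; exact List.map_congr_left fun j _ => hβ j
  have hreg1 : IsWeaklyRegular S ((List.finRange n).map a ++ (List.finRange n).map b) := by
    have h := isWeaklyRegular_X (k := k)
      ((List.finRange n).map Sum.inl ++ (List.finRange n).map (Sum.inr : Fin n → Fin n ⊕ Fin n))
      (List.Nodup.append ((List.nodup_finRange n).map Sum.inl_injective)
        ((List.nodup_finRange n).map Sum.inr_injective) (by
          intro j h1 h2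
          simp only [List.mem_map] at h1 h2
          obtain ⟨_, -, rfl⟩ := h1
          obtain ⟨_, -, h⟩ := h2
          cases h))
    rwa [List.map_append, List.map_map, List.map_map] at h
  have hmem : ∀ s ∈ (List.finRange n).map b ++ (List.finRange n).map a, s ∈ maximalIdeal S := by
    intro s hs
    simp only [List.mem_append, List.mem_map] at hs
    obtain ⟨j, -, rfl⟩ | ⟨j, -, rfl⟩ := hs <;> exact hmax _
  have hts : ∀ t ∈ (List.finRange n).map (fun j => b j - a j), t ∈ maximalIdeal S := by
    intro t ht
    obtain ⟨j, -, rfl⟩ := List.mem_map.1 ht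
    exact sub_mem (hmax _) (hmax _)
  have hsub : ∀ j, b j - a j ∈ Ideal.ofList ((List.finRange n).map (fun j => b j - a j)) :=
    fun j => Ideal.subset_span (List.mem_map_of_mem (f := fun j => b j - a j) (List.mem_finRange j))
  have key := depth_formula' (S := S) (jl.comp ψ) (jr.comp ψ) (x := (List.finRange n).map x)
    (by rw [ofList_map_finRange, hx])
    (by
      rw [hαl, hβl, IsLocalRing.isRegular_iff_isWeaklyRegular_of_subset_maximalIdeal hmem]
      refine IsLocalRing.isWeaklyRegular_of_perm_of_subset_maximalIdeal hreg1
        List.perm_append_comm fun s hs => hmem s ?_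
      rw [List.mem_append] at hs ⊢
      exact hs.symm)
    (by
      rw [hαl, hβl]
      refine le_antisymm (Ideal.span_le.2 hmem) ?_
      rw [maximalIdeal_powerSeries, Ideal.span_le]
      rintro _ ⟨j | j, rfl⟩
      · exact Ideal.subset_span (List.mem_append_right _ (List.mem_map_of_mem (List.mem_finRange j)))
      · exact Ideal.subset_span (List.mem_append_left _ (List.mem_map_of_mem (List.mem_finRange j))))
    ((List.finRange n).map (fun j => b j - a j)) hts
    (by
      rw [hαl]
      exact isWeaklyRegular_sub_append _ a b (fun _ => hmax _) (fun _ => hmax _) hreg1)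
    (by
      rw [hαl, Ideal.ofList_append]
      have ha : ∀ j, a j ∈ Ideal.ofList ((List.finRange n).map (fun j => b j - a j)) ⊔
          Ideal.ofList ((List.finRange n).map a) := fun j =>
        Ideal.mem_sup_right (Ideal.subset_span (List.mem_map_of_mem (List.mem_finRange j)))
      refine le_antisymm (sup_le (Ideal.span_le.2 hts) (Ideal.span_le.2 fun s hs =>
        hmem s (List.mem_append_right _ hs))) ?_
      rw [maximalIdeal_powerSeries, Ideal.span_le]
      rintro _ ⟨j | j, rfl⟩
      · exact ha j
      · have := add_mem (Ideal.mem_sup_left (hsub j)) (ha j)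
        rwa [sub_add_cancel] at this)
    (fun s => powerSeries_hom_sub_mem jl jr _ (fun j => by rw [hjl]; exact hmax _)
      (fun j => by rw [hjr]; exact hmax _)
      (fun c => (MvPowerSeries.rename_C _ c).trans (MvPowerSeries.rename_C _ c).symm)
      (fun j => by
        rw [hjl, hjr, ← neg_sub, neg_mem_iff]
        exact hsub j) (ψ s))
    M N' G N f g hg hfg hinj d e r hd he hr
  simpa using key

end CodimTensor

/-! ### Vanishing of Tor on a presentation -/

namespace CodimTensor
open IsLocalRing RingTheory.Sequence Pointwise

section
variable {R : Type} [CommRing R] (M : Type) [AddCommGroup M] [Module R M]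

/-- Let `C₁ → C₀ → N` be exact with `ε` its second map. If `M ⊗ C₂ → M ⊗ C₁ → M ⊗ C₀` is exact in
the middle, then `M ⊗ ker ε → M ⊗ C₀` is injective. -/
theorem lTensor_ker_injective_of_exact {C₂ C₁ C₀ N : Type} [AddCommGroup C₂] [Module R C₂]
    [AddCommGroup C₁] [Module R C₁] [AddCommGroup C₀] [Module R C₀] [AddCommGroup N] [Module R N]
    (d₂ : C₂ →ₗ[R] C₁) (d₁ : C₁ →ₗ[R] C₀) (ε : C₀ →ₗ[R] N) (h0 : d₁ ∘ₗ d₂ = 0)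
    (h1 : Function.Exact d₁ ε)
    (h : ∀ z, d₁.lTensor M z = 0 → ∃ w, d₂.lTensor M w = z) :
    Function.Injective ((LinearMap.ker ε).subtype.lTensor M) := by
  let q : C₁ →ₗ[R] LinearMap.ker ε := d₁.codRestrict _ fun c => h1.apply_apply_eq_zero c
  have hq : Function.Surjective q := by
    rintro ⟨y, hy⟩
    obtain ⟨c, rfl⟩ := (h1 y).1 hy
    exact ⟨c, rfl⟩
  rw [injective_iff_map_eq_zero]
  intro z hz
  obtain ⟨y, rfl⟩ := LinearMap.lTensor_surjective M hq z
  rw [← LinearMap.lTensor_comp_apply] at hz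
  obtain ⟨w, rfl⟩ := h y hz
  rw [← LinearMap.lTensor_comp_apply]
  have : q ∘ₗ d₂ = 0 := by
    ext c
    exact LinearMap.congr_fun h0 c
  rw [this, LinearMap.lTensor_zero, LinearMap.zero_apply]

/-- Vanishing of `Tor₁(M, N)`, read off from a projective module `P` mapping onto `N` as the
injectivity of `M ⊗ ker ε → M ⊗ P`, does not depend on the choice of `P`. -/
theorem lTensor_ker_injective_transfer {P G N : Type} [AddCommGroup P] [Module R P]
    [AddCommGroup G] [Module R G] [AddCommGroup N] [Module R N] [Module.Projective R P]
    [Module.Projective R G] (ε : P →ₗ[R] N) (hε : Function.Surjective ε) (g : G →ₗ[R] N)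
    (hg : Function.Surjective g)
    (h : Function.Injective ((LinearMap.ker ε).subtype.lTensor M)) :
    Function.Injective ((LinearMap.ker g).subtype.lTensor M) := by
  obtain ⟨u, hu⟩ := Module.projective_lifting_property ε g hε
  obtain ⟨v, hv⟩ := Module.projective_lifting_property g ε hg
  have hu' := fun x => LinearMap.congr_fun hu x
  have hv' := fun x => LinearMap.congr_fun hv x
  simp only [LinearMap.comp_apply] at hu' hv'
  let u' : LinearMap.ker g →ₗ[R] LinearMap.ker ε := u.restrict fun x hx => by
    rw [LinearMap.mem_ker] at hx ⊢; rw [hu', hx]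
  let v' : LinearMap.ker ε →ₗ[R] LinearMap.ker g := v.restrict fun x hx => by
    rw [LinearMap.mem_ker] at hx ⊢; rw [hv', hx]
  let s : G →ₗ[R] LinearMap.ker g := (v ∘ₗ u - LinearMap.id).codRestrict _ fun x => by
    simp [hu', hv']
  have hs : v' ∘ₗ u' - LinearMap.id = s ∘ₗ (LinearMap.ker g).subtype := by
    ext x; rfl
  rw [injective_iff_map_eq_zero]
  intro z hz
  have h1 : u'.lTensor M z = 0 := by
    apply h
    rw [map_zero, ← LinearMap.lTensor_comp_apply]
    have : (LinearMap.ker ε).subtype ∘ₗ u' = u ∘ₗ (LinearMap.ker g).subtype := by ext x; rfl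
    rw [this, LinearMap.lTensor_comp_apply, hz, map_zero]
  have h2 := LinearMap.congr_fun (congrArg (LinearMap.lTensor M) hs) z
  rw [LinearMap.lTensor_comp_apply, hz, map_zero, LinearMap.lTensor_sub, LinearMap.sub_apply,
    LinearMap.lTensor_comp_apply, h1, map_zero, LinearMap.lTensor_id, LinearMap.id_apply,
    zero_sub, neg_eq_zero] at h2
  exact h2

/-- Mathlib's `Tor` is computed from a chosen projective resolution; its vanishing gives
injectivity for every projective module mapping onto `N`. -/
theorem lTensor_ker_injective_of_tor {N : Type} [AddCommGroup N] [Module R N]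
    (htor : Subsingleton
      (((Tor (ModuleCat R) 1).obj (ModuleCat.of R M)).obj (ModuleCat.of R N)))
    {G : Type} [AddCommGroup G] [Module R G] [Module.Projective R G] (g : G →ₗ[R] N)
    (hg : Function.Surjective g) :
    Function.Injective ((LinearMap.ker g).subtype.lTensor M) := by
  let P := projectiveResolution (ModuleCat.of R N)
  let T : ModuleCat R ⥤ ModuleCat R := (MonoidalCategory.tensoringLeft (ModuleCat R)).obj (ModuleCat.of R M)
  have h1 : Limits.IsZero ((T.leftDerived 1).obj (ModuleCat.of R N)) :=
    haveI : Subsingleton ((T.leftDerived 1).obj (ModuleCat.of R N)) := htor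
    ModuleCat.isZero_of_subsingleton _
  have h2 := h1.of_iso (P.isoLeftDerivedObj T 1).symm
  have h3 : ((T.mapHomologicalComplex _).obj P.complex).ExactAt 1 := by
    rw [HomologicalComplex.exactAt_iff_isZero_homology]
    exact h2
  rw [HomologicalComplex.exactAt_iff' _ 2 1 0 (by simp) (by simp),
    ShortComplex.moduleCat_exact_iff] at h3
  have h4 := P.exact₀
  rw [ShortComplex.moduleCat_exact_iff] at h4
  have hε : Function.Surjective (P.π.f 0).hom := (ModuleCat.epi_iff_surjective _).1 inferInstance
  have : Module.Projective R (P.complex.X 0) :=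
    (IsProjective.iff_projective (R := R) (P := P.complex.X 0)).2 (P.projective 0)
  refine lTensor_ker_injective_transfer M (P.π.f 0).hom hε g hg ?_
  refine lTensor_ker_injective_of_exact M (P.complex.d 2 1).hom (P.complex.d 1 0).hom _ ?_ ?_ ?_
  · rw [← ModuleCat.hom_comp, P.complex.d_comp_d, ModuleCat.hom_zero]
  · intro y
    exact ⟨fun hy => h4 y hy, fun ⟨x, hx⟩ => by
      rw [← hx]
      exact LinearMap.congr_fun (congrArg ModuleCat.Hom.hom P.complex_d_comp_π_f_zero) x⟩
  · intro z hz
    exact h3 z hz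
end

end CodimTensor

open CodimTensor

/-- **Vanishing of `Tor₁` plus Cohen–Macaulayness of the tensor product forces the codimension
to be the sum of the projective dimensions** (implication (i) ⇒ (ii) of Corollary 1.8 for two
modules).  Let `R` be a regular local ring containing a field and `M`, `N` finitely generated
`R`-modules with `M ⊗_R N ≠ 0`, `Tor₁^R(M, N) = 0` and `M ⊗_R N` Cohen–Macaulay.  Then
`codim(M ⊗_R N) = pdim M + pdim N`, stated in the equivalent form
`dim(M ⊗_R N) + pdim M + pdim N = dim R`. -/
theorem codim_tensor_eq_sum_projDim (R : Type) [CommRing R] [IsLocalRing R]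
    (hreg : IsRegularLocal R)
    (hfield : ∃ (K : Type) (_ : Field K), Nonempty (K →+* R))
    (M N : Type) [AddCommGroup M] [Module R M] [AddCommGroup N] [Module R N]
    [Module.Finite R M] [Module.Finite R N]
    [Nontrivial (M ⊗[R] N)]
    (htor : Subsingleton
      (((Tor (ModuleCat R) 1).obj (ModuleCat.of R M)).obj (ModuleCat.of R N)))
    (hCM : IsCohenMacaulayMod R (M ⊗[R] N)) :
    moduleDim R (M ⊗[R] N) + projDim R M + projDim R N = ringKrullDim R := by
  obtain ⟨hnoeth, _, s, hs, hcard⟩ := hreg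
  obtain ⟨K, _, ⟨i⟩⟩ := hfield
  have hM : Nontrivial M := by
    rw [← not_subsingleton_iff_nontrivial]
    intro h
    exact not_subsingleton (M ⊗[R] N) inferInstance
  have hN : Nontrivial N := by
    rw [← not_subsingleton_iff_nontrivial]
    intro h
    exact not_subsingleton (M ⊗[R] N) inferInstance
  let n := s.card
  let x : Fin n → R := fun j => (s.equivFin.symm j : R)
  have hx : Ideal.span (Set.range x) = IsLocalRing.maximalIdeal R := by
    rw [← hs]
    congr 1
    change Set.range ((Subtype.val : s → R) ∘ s.equivFin.symm) = _
    rw [s.equivFin.symm.surjective.range_comp]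
    simp
  have hdim : ringKrullDim R = n := hcard.symm
  have hrs := isRegular_parameters i x hx hdim
  have hm : Ideal.ofList ((List.finRange n).map x) = IsLocalRing.maximalIdeal R := by
    rw [ofList_map_finRange, hx]
  have hlen : ((List.finRange n).map x).length = n := by simp
  obtain ⟨d, hd⟩ := exists_hasDepth _ hrs hm M
  obtain ⟨e, he⟩ := exists_hasDepth _ hrs hm N
  obtain ⟨r, hr⟩ := exists_hasDepth _ hrs hm (M ⊗[R] N)
  obtain ⟨p, hp, hpd⟩ := hd.exists_pd _ hrs hm
  obtain ⟨q, hq, hqe⟩ := he.exists_pd _ hrs hm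
  obtain ⟨m, g, hg⟩ := Module.Finite.exists_fin' R N
  have hform := depth_formula_regularLocal i x hx hdim M (LinearMap.ker g) (Fin m → R) N
    (LinearMap.ker g).subtype g hg (LinearMap.exact_subtype_ker_map g)
    (lTensor_ker_injective_of_tor M htor g hg) d e r hd he hr
  rw [← hCM, hr.moduleDepth_eq _ hrs hm, projDim_eq p hp, projDim_eq q hq, hdim]
  have : r + p + q = n := by lia
  change (r : WithBot ℕ∞) + (p : WithBot ℕ∞) + (q : WithBot ℕ∞) = (n : WithBot ℕ∞)
  exact_mod_cast this
end
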